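/- arXiv:1110.3621 — 5 statements merged into one kernel-verified Lean document; each statement's English description precedes it below -/
import Mathlib

section
/- Let n be a natural number and let a_{0,n}, …, a_{n,n} be real numbers such that for every natural number m: ∏_{i=1}^{n} (2m + 2i − 1) = ∑_{j=0}^{min(n,m)} a_{j,n} · m! / (m−j)!. Then for every z > 0 and all α, β ∈ ℝ not both zero, with R := √(α²+β²): ∫₀^{2π} e^{i z (α cosθ + β sinθ)} (sinθ)^{2n} dθ = 2π · ∑_{j=0}^{n} (−1)^j · a_{j,n} · β^{2j} · J_{n+j}(zR) / ( 2^j · z^{n−j} · R^{n+j} ). -/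
/-!
Expanding the exponential, the integral is `∑ₖ (iz)ᵏ/k! · ∫ (α cos θ + β sin θ)ᵏ sin²ⁿ θ dθ`
(`hasSum_integral_exp`, by dominated convergence). By the binomial theorem each integral is a
combination of moments `∫ sin^a cos^b`. A moment vanishes unless `a` and `b` are both even, so odd
`k` contribute nothing, and otherwise it is the explicit quotient of factorials of
`trigMoment_even`.

For `k = 2p`, the quotient `(2q+2n)! q! / ((2q)! (q+n)!)` appearing in the `q`-th binomial term is
`2ⁿ ∏ (2q+2i+1)`, which by hypothesis is `2ⁿ ∑ⱼ aⱼ q(q-1)⋯(q-j+1)`. The sum over `q` is then the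
binomial theorem for `(β² + α²)^p` differentiated `j` times, and collapses to a power of `R²`
(`integral_even_pow_mul_sin`). For each fixed `j` the remaining series in `p` starts at `p = j`;
after the shift `p = k + j` it is the power series of `J_{n+j}(zR)` (`hasSum_term`).
-/

open MeasureTheory Finset

/-- Bessel function of the first kind of order `μ`. -/
noncomputable def besselJ (μ : ℝ) (x : ℝ) : ℝ :=
  ∑' k : ℕ, (-1 : ℝ) ^ k / (k.factorial * Real.Gamma (k + μ + 1)) * (x / 2) ^ (2 * (k : ℝ) + μ)

/-- The moments `∫₀^{2π} sin^a θ cos^b θ dθ`. -/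
noncomputable def trigMoment (a b : ℕ) : ℝ :=
  ∫ θ in (0 : ℝ)..(2 * Real.pi), Real.sin θ ^ a * Real.cos θ ^ b

lemma trigMoment_zero_zero : trigMoment 0 0 = 2 * Real.pi := by
  simp [trigMoment]

lemma trigMoment_one_left (b : ℕ) : trigMoment 1 b = 0 := by
  have hd : ∀ x ∈ Set.uIcc (0 : ℝ) (2 * Real.pi),
      HasDerivAt (fun θ => -(Real.cos θ ^ (b + 1)) / (b + 1))
        (Real.sin x ^ 1 * Real.cos x ^ b) x := by
    intro x _
    have h := (((Real.hasDerivAt_cos x).pow (b + 1)).neg).div_const ((b : ℝ) + 1)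
    refine h.congr_deriv ?_
    have : (b : ℝ) + 1 ≠ 0 := by positivity
    push_cast
    field_simp
  rw [trigMoment, intervalIntegral.integral_eq_sub_of_hasDerivAt hd]
  · simp
  · exact (by fun_prop : Continuous _).intervalIntegrable _ _

lemma trigMoment_one_right (a : ℕ) : trigMoment a 1 = 0 := by
  have hd : ∀ x ∈ Set.uIcc (0 : ℝ) (2 * Real.pi),
      HasDerivAt (fun θ => Real.sin θ ^ (a + 1) / (a + 1))
        (Real.sin x ^ a * Real.cos x ^ 1) x := by
    intro x _
    have h := ((Real.hasDerivAt_sin x).pow (a + 1)).div_const ((a : ℝ) + 1)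
    refine h.congr_deriv ?_
    have : (a : ℝ) + 1 ≠ 0 := by positivity
    push_cast
    field_simp
  rw [trigMoment, intervalIntegral.integral_eq_sub_of_hasDerivAt hd]
  · simp
  · exact (by fun_prop : Continuous _).intervalIntegrable _ _

/-- Integration of the derivative of `sin^(a+1) cos^(b+1)` over a full period. -/
lemma trigMoment_parts (a b : ℕ) :
    (a + 1 : ℝ) * trigMoment a (b + 2) = (b + 1 : ℝ) * trigMoment (a + 2) b := by
  have hd : ∀ x ∈ Set.uIcc (0 : ℝ) (2 * Real.pi),
      HasDerivAt (fun θ => Real.sin θ ^ (a + 1) * Real.cos θ ^ (b + 1))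
        ((a + 1 : ℝ) * (Real.sin x ^ a * Real.cos x ^ (b + 2)) -
          (b + 1 : ℝ) * (Real.sin x ^ (a + 2) * Real.cos x ^ b)) x := by
    intro x _
    have h := ((Real.hasDerivAt_sin x).pow (a + 1)).mul ((Real.hasDerivAt_cos x).pow (b + 1))
    refine h.congr_deriv ?_
    push_cast
    simp only [Pi.pow_apply]
    ring
  have h := intervalIntegral.integral_eq_sub_of_hasDerivAt hd
    ((by fun_prop : Continuous _).intervalIntegrable _ _)
  rw [intervalIntegral.integral_sub ((by fun_prop : Continuous _).intervalIntegrable _ _)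
    ((by fun_prop : Continuous _).intervalIntegrable _ _),
    intervalIntegral.integral_const_mul, intervalIntegral.integral_const_mul] at h
  simp at h
  simpa [trigMoment] using sub_eq_zero.mp h

lemma trigMoment_add (a b : ℕ) :
    trigMoment (a + 2) b + trigMoment a (b + 2) = trigMoment a b := by
  unfold trigMoment
  rw [← intervalIntegral.integral_add ((by fun_prop : Continuous _).intervalIntegrable _ _)
    ((by fun_prop : Continuous _).intervalIntegrable _ _)]
  congr 1
  ext θ
  linear_combination (Real.sin θ ^ a * Real.cos θ ^ b) * Real.sin_sq_add_cos_sq θ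

lemma trigMoment_succ_left (a b : ℕ) :
    trigMoment (a + 2) b = (a + 1) / (a + b + 2) * trigMoment a b := by
  have : (a : ℝ) + b + 2 ≠ 0 := by positivity
  field_simp
  linear_combination (a + 1 : ℝ) * trigMoment_add a b - trigMoment_parts a b

lemma trigMoment_succ_right (a b : ℕ) :
    trigMoment a (b + 2) = (b + 1) / (a + b + 2) * trigMoment a b := by
  have : (a : ℝ) + b + 2 ≠ 0 := by positivity
  field_simp
  linear_combination (b + 1 : ℝ) * trigMoment_add a b + trigMoment_parts a b

lemma trigMoment_odd_left (t b : ℕ) : trigMoment (2 * t + 1) b = 0 := by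
  induction t with
  | zero => exact trigMoment_one_left b
  | succ t ih =>
    rw [show 2 * (t + 1) + 1 = 2 * t + 1 + 2 by ring, trigMoment_succ_left, ih, mul_zero]

lemma trigMoment_odd_right (a s : ℕ) : trigMoment a (2 * s + 1) = 0 := by
  induction s with
  | zero => exact trigMoment_one_right a
  | succ t ih =>
    rw [show 2 * (t + 1) + 1 = 2 * t + 1 + 2 by ring, trigMoment_succ_right, ih, mul_zero]

lemma trigMoment_even (t s : ℕ) :
    trigMoment (2 * t) (2 * s) = 2 * Real.pi * ((2 * t).factorial * (2 * s).factorial) /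
      (4 ^ (t + s) * t.factorial * s.factorial * (t + s).factorial) := by
  induction t with
  | zero =>
    induction s with
    | zero => simp [trigMoment_zero_zero]
    | succ s ih =>
      rw [show 2 * (s + 1) = 2 * s + 1 + 1 by ring, trigMoment_succ_right, ih]
      simp only [← add_assoc, Nat.factorial_succ, pow_succ]
      push_cast
      simp only [Nat.factorial_zero, zero_add]
      field_simp
      ring
  | succ t ih =>
    rw [show 2 * (t + 1) = 2 * t + 1 + 1 by ring, trigMoment_succ_left, ih]
    simp only [add_right_comm t 1 s, Nat.factorial_succ, pow_succ]
    push_cast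
    field_simp
    ring

lemma sum_range_two_mul_of_odd_zero (f : ℕ → ℝ) (hf : ∀ q, f (2 * q + 1) = 0) (p : ℕ) :
    ∑ i ∈ range (2 * p + 1), f i = ∑ q ∈ range (p + 1), f (2 * q) := by
  induction p with
  | zero => simp
  | succ p ih =>
    rw [show 2 * (p + 1) + 1 = 2 * p + 1 + 1 + 1 by ring, sum_range_succ, sum_range_succ, ih, hf,
      sum_range_succ _ (p + 1)]
    simp [mul_add]

lemma integral_pow_mul_sin (n k : ℕ) (α β : ℝ) :
    ∫ θ in (0 : ℝ)..(2 * Real.pi),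
      (α * Real.cos θ + β * Real.sin θ) ^ k * Real.sin θ ^ (2 * n) =
    ∑ i ∈ range (k + 1), β ^ i * α ^ (k - i) * (k.choose i) * trigMoment (2 * n + i) (k - i) := by
  have h : ∀ θ : ℝ, (α * Real.cos θ + β * Real.sin θ) ^ k * Real.sin θ ^ (2 * n) =
      ∑ i ∈ range (k + 1), β ^ i * α ^ (k - i) * (k.choose i) *
        (Real.sin θ ^ (2 * n + i) * Real.cos θ ^ (k - i)) := by
    intro θ
    rw [add_comm, add_pow, sum_mul]
    refine sum_congr rfl fun i _ => ?_
    rw [mul_pow, mul_pow, pow_add]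
    ring
  simp_rw [h]
  rw [intervalIntegral.integral_finsetSum]
  · simp_rw [intervalIntegral.integral_const_mul]
    rfl
  · intro i _
    exact (by fun_prop : Continuous _).intervalIntegrable _ _

lemma integral_odd_pow_mul_sin (n p : ℕ) (α β : ℝ) :
    ∫ θ in (0 : ℝ)..(2 * Real.pi),
      (α * Real.cos θ + β * Real.sin θ) ^ (2 * p + 1) * Real.sin θ ^ (2 * n) = 0 := by
  rw [integral_pow_mul_sin]
  refine sum_eq_zero fun i hi => ?_
  rw [mem_range] at hi
  rcases Nat.even_or_odd' i with ⟨q, rfl | rfl⟩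
  · rw [show 2 * p + 1 - 2 * q = 2 * (p - q) + 1 by omega, trigMoment_odd_right, mul_zero]
  · rw [← add_assoc, ← mul_add, trigMoment_odd_left, mul_zero]

/-- Cross-multiplied form of `(2(n+q))! / (2q)! = 2ⁿ ((n+q)! / q!) ∏ (2q + 2i + 1)`: the even factors
and the odd factors separated. -/
lemma factorial_two_mul_add (n q : ℕ) :
    ((2 * (n + q)).factorial : ℝ) * q.factorial =
      2 ^ n * (n + q).factorial * (2 * q).factorial *
        ∏ i ∈ range n, (2 * (q : ℝ) + 2 * (i : ℝ) + 1) := by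
  induction n with
  | zero => simp [mul_comm]
  | succ n ih =>
    rw [show 2 * (n + 1 + q) = 2 * (n + q) + 1 + 1 by ring, prod_range_succ,
      show n + 1 + q = n + q + 1 by ring]
    simp only [Nat.factorial_succ, pow_succ]
    push_cast
    linear_combination (2 * ((n : ℝ) + q) + 1 + 1) * (2 * ((n : ℝ) + q) + 1) * ih

/-- The binomial theorem, divided by `p!`, after applying `x^j (d/dx)^j`. -/
lemma sum_descFactorial_binomial (x y : ℝ) (p j : ℕ) :
    ∑ q ∈ range (p + 1), (q.descFactorial j : ℝ) * x ^ q * y ^ (p - q) /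
      (q.factorial * (p - q).factorial) =
    p.descFactorial j * x ^ j * (x + y) ^ (p - j) / p.factorial := by
  rcases lt_or_ge p j with h | h
  · rw [Nat.descFactorial_of_lt h]
    simp only [Nat.cast_zero, zero_mul, zero_div]
    refine sum_eq_zero fun q hq => ?_
    rw [Nat.descFactorial_of_lt (by rw [mem_range] at hq; omega)]
    simp
  · obtain ⟨k, rfl⟩ := Nat.exists_eq_add_of_le h
    have key : ∀ r : ℕ, ((j + r).descFactorial j : ℝ) * r.factorial = (j + r).factorial := by
      intro r
      have := Nat.factorial_mul_descFactorial (n := j + r) (k := j) (by omega)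
      rw [Nat.add_sub_cancel_left] at this
      rw [mul_comm]
      exact_mod_cast this
    rw [add_assoc, sum_range_add, sum_eq_zero, zero_add, Nat.add_sub_cancel_left, add_pow,
      mul_sum, sum_div]
    · refine sum_congr rfl fun r hr => ?_
      have hr' : r ≤ k := by rw [mem_range] at hr; omega
      rw [Nat.add_sub_add_left, Nat.cast_choose ℝ hr', pow_add, ← key r, ← key k]
      have h1 : ((j + r).descFactorial j : ℝ) ≠ 0 := by
        exact_mod_cast (Nat.descFactorial_pos.mpr (by omega)).ne'
      have h2 : ((j + k).descFactorial j : ℝ) ≠ 0 := by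
        exact_mod_cast (Nat.descFactorial_pos.mpr (by omega)).ne'
      field_simp
    · intro q hq
      rw [Nat.descFactorial_of_lt (by rw [mem_range] at hq; omega)]
      simp

/-- The hypothesis on `a` with falling factorials, so that the range of `j` is independent of `m`. -/
lemma prod_eq_sum_descFactorial (n : ℕ) (a : ℕ → ℝ)
    (ha : ∀ m : ℕ, ∏ i ∈ Finset.range n, (2 * (m : ℝ) + 2 * (i : ℝ) + 1) =
      ∑ j ∈ Finset.range (min n m + 1),
        a j * (m.factorial : ℝ) / ((m - j).factorial : ℝ)) (m : ℕ) :
    ∏ i ∈ range n, (2 * (m : ℝ) + 2 * (i : ℝ) + 1) =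
      ∑ j ∈ range (n + 1), a j * (m.descFactorial j : ℝ) := by
  rw [ha m]
  symm
  rw [← sum_subset (range_mono (by omega : min n m + 1 ≤ n + 1))]
  · refine sum_congr rfl fun j hj => ?_
    rw [mem_range] at hj
    have := Nat.factorial_mul_descFactorial (n := m) (k := j) (by omega)
    rw [← this]
    push_cast
    field_simp
  · intro j hj hj'
    rw [mem_range] at hj hj'
    rw [Nat.descFactorial_of_lt (by omega)]
    simp

/-- The even moments, with the binomial sum carried out; the
falling factorial makes the terms with `j > p` vanish. -/
lemma integral_even_pow_mul_sin (n p : ℕ) (a : ℕ → ℝ)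
    (ha : ∀ m : ℕ, ∏ i ∈ Finset.range n, (2 * (m : ℝ) + 2 * (i : ℝ) + 1) =
      ∑ j ∈ Finset.range (min n m + 1),
        a j * (m.factorial : ℝ) / ((m - j).factorial : ℝ)) (α β : ℝ) :
    ∫ θ in (0 : ℝ)..(2 * Real.pi),
      (α * Real.cos θ + β * Real.sin θ) ^ (2 * p) * Real.sin θ ^ (2 * n) =
    ∑ j ∈ range (n + 1), 2 * Real.pi * (2 * p).factorial / (2 ^ n * 4 ^ p * (p + n).factorial) *
      a j * (p.descFactorial j * (β ^ 2) ^ j * (β ^ 2 + α ^ 2) ^ (p - j) / p.factorial) := by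
  rw [integral_pow_mul_sin, sum_range_two_mul_of_odd_zero]
  · simp_rw [← sum_descFactorial_binomial, mul_sum]
    rw [sum_comm]
    refine sum_congr rfl fun q hq => ?_
    have hq' : q ≤ p := by rw [mem_range] at hq; omega
    have hm := factorial_two_mul_add n q
    rw [prod_eq_sum_descFactorial n a ha] at hm
    rw [← mul_add, ← Nat.mul_sub, trigMoment_even, Nat.cast_choose ℝ (by omega), ← Nat.mul_sub]
    rw [show n + q + (p - q) = p + n by omega, pow_mul, pow_mul, pow_add,
      show (4 : ℝ) ^ n = 2 ^ n * 2 ^ n by rw [← mul_pow]; norm_num]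
    have h2 : ((2 * (n + q)).factorial : ℝ) = 2 ^ n * (n + q).factorial * (2 * q).factorial *
        (∑ j ∈ range (n + 1), a j * (q.descFactorial j : ℝ)) / q.factorial := by
      rw [← hm]; field_simp
    rw [h2]
    trans (∑ j ∈ range (n + 1), a j * (q.descFactorial j : ℝ)) *
      (2 * Real.pi * (2 * p).factorial / (2 ^ n * 4 ^ p * (p + n).factorial) *
        ((β ^ 2) ^ q * (α ^ 2) ^ (p - q) / (q.factorial * (p - q).factorial)))
    · field_simp
    · rw [sum_mul]
      refine sum_congr rfl fun j _ => ?_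
      field_simp
  · intro q
    rw [← add_assoc, ← mul_add, trigMoment_odd_left, mul_zero]

/-- Termwise integration of the exponential series, dominated by `(|z| (|α| + |β|))ᵏ / k!`. -/
lemma hasSum_integral_exp (n : ℕ) (z α β : ℝ) :
    HasSum (fun k : ℕ => ((Complex.I * z) ^ k / k.factorial) *
      ((∫ θ in (0 : ℝ)..(2 * Real.pi),
        (α * Real.cos θ + β * Real.sin θ) ^ k * Real.sin θ ^ (2 * n) : ℝ) : ℂ))
    (∫ θ in (0 : ℝ)..(2 * Real.pi),
      Complex.exp (Complex.I * ((z * (α * Real.cos θ + β * Real.sin θ) : ℝ) : ℂ)) *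
        ((Real.sin θ ^ (2 * n) : ℝ) : ℂ)) := by
  have h : HasSum (fun k : ℕ => ∫ θ in (0 : ℝ)..(2 * Real.pi),
      ((Complex.I * z) ^ k / k.factorial) *
        (((α * Real.cos θ + β * Real.sin θ) ^ k * Real.sin θ ^ (2 * n) : ℝ) : ℂ))
    (∫ θ in (0 : ℝ)..(2 * Real.pi),
      Complex.exp (Complex.I * ((z * (α * Real.cos θ + β * Real.sin θ) : ℝ) : ℂ)) *
        ((Real.sin θ ^ (2 * n) : ℝ) : ℂ)) := by
    refine intervalIntegral.hasSum_integral_of_dominated_convergence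
      (fun k _ => (|z| * (|α| + |β|)) ^ k / k.factorial) ?_ ?_ ?_ ?_ ?_
    · intro k
      exact (by fun_prop : Continuous _).aestronglyMeasurable
    · intro k
      refine Filter.Eventually.of_forall fun θ _ => ?_
      rw [norm_mul, norm_div, norm_pow, norm_mul, Complex.norm_I, one_mul, Complex.norm_real,
        Complex.norm_real, Complex.norm_natCast, norm_mul, norm_pow, norm_pow, mul_pow,
        Real.norm_eq_abs, Real.norm_eq_abs, Real.norm_eq_abs]
      have h1 : |α * Real.cos θ + β * Real.sin θ| ≤ |α| + |β| := by
        refine (abs_add_le _ _).trans ?_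
        rw [abs_mul, abs_mul]
        have := mul_le_mul_of_nonneg_left (Real.abs_cos_le_one θ) (abs_nonneg α)
        have := mul_le_mul_of_nonneg_left (Real.abs_sin_le_one θ) (abs_nonneg β)
        linarith
      have h2 : |Real.sin θ| ^ (2 * n) ≤ 1 := pow_le_one₀ (abs_nonneg _) (Real.abs_sin_le_one θ)
      have h3 := pow_le_pow_left₀ (abs_nonneg _) h1 k
      calc |z| ^ k / k.factorial * (|α * Real.cos θ + β * Real.sin θ| ^ k *
            |Real.sin θ| ^ (2 * n))
          ≤ |z| ^ k / k.factorial * ((|α| + |β|) ^ k * 1) := by gcongr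
        _ = _ := by ring
    · exact Filter.Eventually.of_forall fun θ _ => Real.summable_pow_div_factorial _
    · exact intervalIntegrable_const
    · refine Filter.Eventually.of_forall fun θ _ => ?_
      have := (NormedSpace.expSeries_div_hasSum_exp
        (Complex.I * ((z * (α * Real.cos θ + β * Real.sin θ) : ℝ) : ℂ))).mul_right
          ((Real.sin θ ^ (2 * n) : ℝ) : ℂ)
      rw [← Complex.exp_eq_exp_ℂ] at this
      refine this.congr_fun ?_
      intro k
      rw [Complex.ofReal_mul, Complex.ofReal_mul, ← mul_assoc, mul_pow, Complex.ofReal_pow]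
      ring
  refine h.congr_fun ?_
  intro k
  rw [intervalIntegral.integral_const_mul, intervalIntegral.integral_ofReal]

lemma besselJ_hasSum (m : ℕ) (x : ℝ) (hx : 0 < x) :
    HasSum (fun k : ℕ => (-1 : ℝ) ^ k / (k.factorial * (k + m).factorial) * (x / 2) ^ (2 * k + m))
      (besselJ m x) := by
  have hs : Summable (fun k : ℕ =>
      (-1 : ℝ) ^ k / (k.factorial * (k + m).factorial) * (x / 2) ^ (2 * k + m)) := by
    refine Summable.of_norm_bounded
      ((Real.summable_pow_div_factorial ((x / 2) ^ 2)).mul_left ((x / 2) ^ m)) fun k => ?_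
    have h1 : (1 : ℝ) ≤ (k + m).factorial := by exact_mod_cast Nat.factorial_pos _
    rw [norm_mul, norm_div, norm_pow, norm_neg, norm_one, one_pow, Real.norm_of_nonneg (by positivity),
      Real.norm_of_nonneg (by positivity), pow_add, pow_mul]
    calc 1 / ((k.factorial : ℝ) * (k + m).factorial) * (((x / 2) ^ 2) ^ k * (x / 2) ^ m)
        ≤ 1 / ((k.factorial : ℝ) * 1) * (((x / 2) ^ 2) ^ k * (x / 2) ^ m) := by gcongr
      _ = _ := by ring
  have he : besselJ m x = ∑' k : ℕ,
      (-1 : ℝ) ^ k / (k.factorial * (k + m).factorial) * (x / 2) ^ (2 * k + m) := by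
    unfold besselJ
    refine tsum_congr fun k => ?_
    rw [show (k : ℝ) + m + 1 = ((k + m : ℕ) : ℝ) + 1 by push_cast; ring, Real.Gamma_nat_eq_factorial,
      show 2 * (k : ℝ) + m = ((2 * k + m : ℕ) : ℝ) by push_cast; ring, Real.rpow_natCast]
  rw [he]
  exact hs.hasSum

/-- The contribution of `a j`: shifting the summation index by `j` gives a Bessel series. -/
lemma hasSum_term (n j : ℕ) (hj : j ≤ n) (c z b R : ℝ) (hz : 0 < z) (hR : 0 < R) :
    HasSum (fun p : ℕ => (-1 : ℝ) ^ p * z ^ (2 * p) / (2 * p).factorial *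
      (2 * Real.pi * (2 * p).factorial / (2 ^ n * 4 ^ p * (p + n).factorial) *
      c * (p.descFactorial j * b * (R ^ 2) ^ (p - j) / p.factorial)))
    (2 * Real.pi * ((-1 : ℝ) ^ j * c * b * besselJ ((n : ℝ) + (j : ℝ)) (z * R) /
            (2 ^ j * z ^ (n - j) * R ^ (n + j)))) := by
  rw [← hasSum_nat_add_iff' j, sum_eq_zero, sub_zero]
  · have h := (besselJ_hasSum (n + j) (z * R) (by positivity)).mul_left
      (2 * Real.pi * ((-1 : ℝ) ^ j * c * b / (2 ^ j * z ^ (n - j) * R ^ (n + j))))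
    push_cast at h
    rw [mul_div_right_comm, ← mul_assoc (2 * Real.pi)]
    refine h.congr_fun ?_
    · intro k
      -- For `p = k + j` the falling factorial cancels `p!` down to `k!`.
      have key : ((k + j).descFactorial j : ℝ) * k.factorial = (k + j).factorial := by
        have := Nat.factorial_mul_descFactorial (n := k + j) (k := j) (by omega)
        rw [Nat.add_sub_cancel] at this
        rw [mul_comm]
        exact_mod_cast this
      have h1 : ((k + j).descFactorial j : ℝ) ≠ 0 := by
        exact_mod_cast (Nat.descFactorial_pos.mpr (by omega)).ne'
      obtain ⟨d, rfl⟩ := Nat.exists_eq_add_of_le hj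
      rw [← key, Nat.add_sub_cancel, Nat.add_sub_cancel_left,
        show k + j + (j + d) = k + (j + d + j) by ring,
        show (4 : ℝ) = 2 ^ 2 by norm_num, ← pow_mul 2 2, div_pow]
      field_simp
      ring
  · intro p hp
    rw [Nat.descFactorial_of_lt (by rw [mem_range] at hp; omega)]
    simp

theorem stmt11 (n : ℕ) (a : ℕ → ℝ)
    (ha : ∀ m : ℕ, ∏ i ∈ Finset.range n, (2 * (m : ℝ) + 2 * (i : ℝ) + 1) =
      ∑ j ∈ Finset.range (min n m + 1),
        a j * (m.factorial : ℝ) / ((m - j).factorial : ℝ))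
    (z α β : ℝ) (hz : 0 < z) (hαβ : ¬(α = 0 ∧ β = 0))
    (R : ℝ) (hR : R = Real.sqrt (α ^ 2 + β ^ 2)) :
    (∫ θ in (0 : ℝ)..(2 * Real.pi),
      Complex.exp (Complex.I * ((z * (α * Real.cos θ + β * Real.sin θ) : ℝ) : ℂ)) *
        ((Real.sin θ ^ (2 * n) : ℝ) : ℂ))
    = ((2 * Real.pi *
        ∑ j ∈ Finset.range (n + 1),
          (-1 : ℝ) ^ j * a j * β ^ (2 * j) * besselJ ((n : ℝ) + (j : ℝ)) (z * R) /
            (2 ^ j * z ^ (n - j) * R ^ (n + j)) : ℝ) : ℂ) := by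
  have hpos : 0 < α ^ 2 + β ^ 2 := by
    rcases not_and_or.mp hαβ with h | h <;> positivity
  have hRpos : 0 < R := hR ▸ Real.sqrt_pos.mpr hpos
  have hR2 : β ^ 2 + α ^ 2 = R ^ 2 := by rw [hR, Real.sq_sqrt hpos.le, add_comm]
  have h1 := hasSum_integral_exp n z α β
  -- Odd powers integrate to zero, so only the even-indexed terms survive.
  rw [← (mul_right_injective₀ (two_ne_zero' ℕ)).hasSum_iff] at h1
  · refine h1.unique ?_
    have h2 := Complex.hasSum_ofReal.mpr (hasSum_sum (s := range (n + 1)) fun j hj =>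
      hasSum_term n j (by rw [mem_range] at hj; omega) (a j) z ((β ^ 2) ^ j) R hz hRpos)
    rw [← mul_sum] at h2
    simp_rw [pow_mul β]
    convert h2 using 1
    ext p
    simp only [Function.comp]
    rw [integral_even_pow_mul_sin n p a ha, hR2, ← mul_sum, mul_pow, pow_mul Complex.I,
      Complex.I_sq]
    push_cast
    rfl
  · intro k hk
    rcases Nat.even_or_odd' k with ⟨q, rfl | rfl⟩
    · exact absurd ⟨q, rfl⟩ hk
    · rw [integral_odd_pow_mul_sin]
      simp
end

section
/- Let d ≥ 3 be an integer, let z > 0, and let α = (α_1,…,α_d) ∈ ℝ^d be nonzero with Euclidean norm ‖α‖. Then ∫₀^π dθ_1 ⋯ ∫₀^π dθ_{d−2} ∫₀^{2π} dφ of exp( i z ( α_d sinθ_1 ⋯ sinθ_{d−2} sinφ + α_{d−1} sinθ_1 ⋯ sinθ_{d−2} cosφ + ⋯ + α_2 sinθ_1 cosθ_2 + α_1 cosθ_1 ) ) · ( Γ(1+d/2)/π^{d/2} ) · (sinθ_1)^d (sinθ_2)^{d−1} ⋯ (sinθ_{d−2})³ · sin²φ equals 2^{d/2} Γ(1+d/2)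 · ( J_{d/2}(z‖α‖)/(z‖α‖)^{d/2} − (α_d²/‖α‖²) · J_{d/2+1}(z‖α‖)/(z‖α‖)^{d/2−1} ). -/
/-!
In spherical coordinates the weight `∏ sin(θ_i)^(d - i)` is the surface density of the unit sphere
times the square of the last coordinate `x_d`, so the left side is, up to a constant, the
characteristic function of `x_d² dσ`. Write `E_μ(t) = ∑ (-1)^k t^k / (k! 4^k Γ(k + μ + 1))`
(`besselE`), so that `J_μ(x) / x^μ = 2^(-μ) E_μ(x²)`. Absorbing `z` into `α`, the claim becomes
`∫ e^{i⟨α, x⟩} x_d² dσ = π^{d/2} (E_{d/2}(‖α‖²) - α_d² / 2 · E_{d/2+1}(‖α‖²))`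
(`integral_sphere`), which is proved by induction on the dimension.

Splitting off the first polar angle `θ` rescales the remaining components of `α` by `sin θ`, and
the inductive step is the Sonine-type integral
`∫₀^π e^{i a cos θ} sin^{p+1}θ E_{p/2}(t sin²θ) dθ = √π E_{(p+1)/2}(a² + t)`
(`integral_exp_cos_mul_besselE`), used once for each of the two terms. It follows by expanding both
factors in power series, evaluating the moments `∫₀^π cos^m θ sin^p θ dθ` by Gamma functions, and
collecting terms of equal total degree with the binomial theorem.

The base case is the circle (`integral_circle`): folding the lower half circle onto the upper one
produces `2 cos(b sin φ)`, which is the same formula on the zero-dimensional sphere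
(`cos_eq_besselE`), so the Sonine-type integral applies once more.
-/

open MeasureTheory Finset

/-! ### The normalized Bessel series -/

/-- The Taylor coefficients of `besselE μ`. -/
noncomputable def besselCoeff (μ : ℝ) (k : ℕ) : ℝ :=
  (-1 : ℝ) ^ k / (k.factorial * 4 ^ k * Real.Gamma (k + μ + 1))

/-- The entire function with `J_μ(x) = (x / 2) ^ μ * besselE μ (x ^ 2)`. -/
noncomputable def besselE (μ : ℝ) (t : ℝ) : ℝ := ∑' k : ℕ, besselCoeff μ k * t ^ k

lemma Gamma_add_one_le (μ : ℝ) (hμ : 0 ≤ μ) (k : ℕ) :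
    Real.Gamma (μ + 1) ≤ Real.Gamma (k + μ + 1) := by
  induction k with
  | zero => simp
  | succ k ih =>
    have h : ((k + 1 : ℕ) : ℝ) + μ + 1 = (k + μ + 1) + 1 := by push_cast; ring
    have hp : (0 : ℝ) < k + μ + 1 := by positivity
    rw [h, Real.Gamma_add_one hp.ne']
    have hG : 0 < Real.Gamma (k + μ + 1) := Real.Gamma_pos_of_pos hp
    have : (1 : ℝ) ≤ k + μ + 1 := by linarith [(Nat.cast_nonneg k : (0 : ℝ) ≤ k)]
    nlinarith

/-- The series is absolutely convergent: `Γ(k + μ + 1)` is at least `Γ(μ + 1)`, so it is dominated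
by an exponential series. -/
lemma summable_norm_besselCoeff (μ : ℝ) (hμ : 0 ≤ μ) (t : ℝ) :
    Summable fun k : ℕ => ‖besselCoeff μ k * t ^ k‖ := by
  have hG : 0 < Real.Gamma (μ + 1) := Real.Gamma_pos_of_pos (by linarith)
  refine Summable.of_nonneg_of_le (fun k => norm_nonneg _) (fun k => ?_)
    ((Real.summable_pow_div_factorial (|t|)).mul_left (1 / Real.Gamma (μ + 1)))
  have hk := Gamma_add_one_le μ hμ k
  have hk0 : 0 < Real.Gamma (k + μ + 1) := lt_of_lt_of_le hG hk
  have h4 : (1 : ℝ) ≤ 4 ^ k := one_le_pow₀ (by norm_num)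
  have hf : (0 : ℝ) < k.factorial := by positivity
  unfold besselCoeff
  simp only [norm_mul, norm_div, norm_pow, norm_neg, norm_one, one_pow, Real.norm_eq_abs,
    abs_of_pos hk0, Nat.abs_cast, Nat.abs_ofNat]
  rw [div_mul_eq_mul_div, one_mul, div_mul_div_comm, one_mul]
  have hle : Real.Gamma (μ + 1) * k.factorial ≤ k.factorial * 4 ^ k * Real.Gamma (k + μ + 1) := by
    calc Real.Gamma (μ + 1) * k.factorial
        ≤ Real.Gamma (k + μ + 1) * (k.factorial * 4 ^ k) :=
          mul_le_mul hk (le_mul_of_one_le_right hf.le h4) hf.le hk0.le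
      _ = _ := by ring
  gcongr

lemma hasSum_besselE (μ : ℝ) (hμ : 0 ≤ μ) (t : ℝ) :
    HasSum (fun k : ℕ => besselCoeff μ k * t ^ k) (besselE μ t) :=
  (summable_norm_besselCoeff μ hμ t).of_norm.hasSum

lemma continuous_besselE_sin (μ : ℝ) (hμ : 0 ≤ μ) (t : ℝ) :
    Continuous fun θ : ℝ => besselE μ (t * Real.sin θ ^ 2) := by
  refine continuous_tsum (u := fun k => ‖besselCoeff μ k * t ^ k‖) (fun k => by fun_prop)
    (summable_norm_besselCoeff μ hμ t) (fun k θ => ?_)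
  rw [mul_pow, ← mul_assoc, norm_mul]
  refine mul_le_of_le_one_right (norm_nonneg _) ?_
  rw [norm_pow, Real.norm_eq_abs, abs_of_nonneg (sq_nonneg _)]
  exact pow_le_one₀ (sq_nonneg _) (Real.sin_sq_le_one θ)

lemma besselJ_div_rpow (μ x : ℝ) (hx : 0 < x) :
    besselJ μ x / x ^ μ = besselE μ (x ^ 2) / 2 ^ μ := by
  have h : besselJ μ x = besselE μ (x ^ 2) * (x ^ μ / 2 ^ μ) := by
    unfold besselJ besselE
    rw [← tsum_mul_right]
    congr 1
    ext k
    rw [Real.rpow_add (by positivity), Real.div_rpow hx.le (by norm_num) μ,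
      show (2 * (k : ℝ)) = ((2 * k : ℕ) : ℝ) by push_cast; rfl, Real.rpow_natCast, div_pow,
      pow_mul, pow_mul, besselCoeff, show (2 : ℝ) ^ 2 = 4 by norm_num]
    simp only [div_eq_mul_inv, mul_inv]
    ring
  have : x ^ μ ≠ 0 := (Real.rpow_pos_of_pos hx μ).ne'
  rw [h]
  field_simp

/-! ### Moments of sine and cosine -/

lemma integral_sin_pow_eq_Gamma (p : ℕ) :
    ∫ θ in (0 : ℝ)..Real.pi, Real.sin θ ^ p =
      √Real.pi * Real.Gamma (((p : ℝ) + 1) / 2) / Real.Gamma ((p : ℝ) / 2 + 1) := by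
  induction p using Nat.twoStepInduction with
  | zero =>
    simp [Real.Gamma_one_half_eq, Real.mul_self_sqrt Real.pi_pos.le, -one_div]
  | one =>
    rw [Nat.cast_one, Real.Gamma_add_one (by norm_num), Real.Gamma_one_half_eq]
    have : √Real.pi ≠ 0 := (Real.sqrt_pos.2 Real.pi_pos).ne'
    simp
    field_simp
    norm_num
  | more n ih _ =>
    rw [integral_sin_pow, ih]
    have e1 : ((n + 2 : ℕ) : ℝ) / 2 + 1 = ((n : ℝ) / 2 + 1) + 1 := by push_cast; ring
    have e2 : (((n + 2 : ℕ) : ℝ) + 1) / 2 = ((n : ℝ) + 1) / 2 + 1 := by push_cast; ring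
    rw [e1, e2, Real.Gamma_add_one (s := (n : ℝ) / 2 + 1) (by positivity),
      Real.Gamma_add_one (s := ((n : ℝ) + 1) / 2) (by positivity)]
    have : Real.Gamma ((n : ℝ) / 2 + 1) ≠ 0 := (Real.Gamma_pos_of_pos (by positivity)).ne'
    simp
    field_simp

/-- Integration of the derivative of `cos ^ (m + 1) * sin ^ (p + 1)`, which vanishes at both
endpoints. -/
lemma integral_cos_pow_mul_sin_pow_succ (m p : ℕ) :
    ∫ θ in (0 : ℝ)..Real.pi, Real.cos θ ^ (m + 2) * Real.sin θ ^ p =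
      ((m : ℝ) + 1) / (p + 1) *
        ∫ θ in (0 : ℝ)..Real.pi, Real.cos θ ^ m * Real.sin θ ^ (p + 2) := by
  have hd : ∀ θ ∈ Set.uIcc 0 Real.pi,
      HasDerivAt (fun θ => Real.cos θ ^ (m + 1) * Real.sin θ ^ (p + 1))
        (((p : ℝ) + 1) * (Real.cos θ ^ (m + 2) * Real.sin θ ^ p)
          - ((m : ℝ) + 1) * (Real.cos θ ^ m * Real.sin θ ^ (p + 2))) θ := by
    intro θ _
    refine (((Real.hasDerivAt_cos θ).fun_pow (m + 1)).fun_mul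
      ((Real.hasDerivAt_sin θ).fun_pow (p + 1))).congr_deriv ?_
    push_cast [Nat.add_sub_cancel]
    ring
  have h := intervalIntegral.integral_eq_sub_of_hasDerivAt hd
    (Continuous.intervalIntegrable (by fun_prop) _ _)
  rw [intervalIntegral.integral_sub (Continuous.intervalIntegrable (by fun_prop) _ _)
    (Continuous.intervalIntegrable (by fun_prop) _ _), intervalIntegral.integral_const_mul,
    intervalIntegral.integral_const_mul] at h
  simp at h
  have hp : (p : ℝ) + 1 ≠ 0 := by positivity
  field_simp
  linarith

lemma integral_cos_pow_even_mul_sin_pow (m p : ℕ) :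
    ∫ θ in (0 : ℝ)..Real.pi, Real.cos θ ^ (2 * m) * Real.sin θ ^ p =
      (2 * m).factorial / (4 ^ m * m.factorial) *
        (√Real.pi * Real.Gamma (((p : ℝ) + 1) / 2) / Real.Gamma (m + (p : ℝ) / 2 + 1)) := by
  induction m generalizing p with
  | zero => simpa using integral_sin_pow_eq_Gamma p
  | succ m ih =>
    rw [show 2 * (m + 1) = 2 * m + 2 by ring, integral_cos_pow_mul_sin_pow_succ, ih]
    have e1 : (m : ℝ) + ((p + 2 : ℕ) : ℝ) / 2 + 1 = ((m + 1 : ℕ) : ℝ) + (p : ℝ) / 2 + 1 := by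
      push_cast; ring
    have e2 : (((p + 2 : ℕ) : ℝ) + 1) / 2 = ((p : ℝ) + 1) / 2 + 1 := by push_cast; ring
    rw [e1, e2, Real.Gamma_add_one (s := ((p : ℝ) + 1) / 2) (by positivity)]
    have : Real.Gamma (((m + 1 : ℕ) : ℝ) + (p : ℝ) / 2 + 1) ≠ 0 :=
      (Real.Gamma_pos_of_pos (by positivity)).ne'
    rw [Nat.factorial_succ (2 * m + 1), Nat.factorial_succ (2 * m), Nat.factorial_succ m]
    push_cast at this ⊢
    field_simp
    ring

lemma integral_cos_pow_odd_mul_sin_pow (m p : ℕ) (hm : Odd m) :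
    ∫ θ in (0 : ℝ)..Real.pi, Real.cos θ ^ m * Real.sin θ ^ p = 0 := by
  have h := intervalIntegral.integral_comp_sub_left
    (fun θ => Real.cos θ ^ m * Real.sin θ ^ p) Real.pi (a := 0) (b := Real.pi)
  simp [hm.neg_pow] at h
  linarith

/-! ### The Sonine-type integral -/

/-- The binomial theorem, summed: two families of powers weighted by the Gamma factor of the total
degree assemble to `besselE` at the sum. -/
lemma hasSum_antidiagonal_besselE (μ : ℝ) (s t : ℝ) (S : ℂ)
    (h : HasSum (fun q : ℕ × ℕ => (((-1) ^ (q.1 + q.2) * s ^ q.1 * t ^ q.2 /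
      (4 ^ (q.1 + q.2) * q.1.factorial * q.2.factorial *
        Real.Gamma ((q.1 + q.2 : ℕ) + μ + 1)) : ℝ) : ℂ)) S) :
    S = (besselE μ (s + t) : ℂ) := by
  rw [← Finset.HasAntidiagonal.sigmaAntidiagonalEquivProd.hasSum_iff] at h
  have h' := h.sigma (fun n => Finset.hasSum (s := antidiagonal n) (f := fun q : ℕ × ℕ =>
    (((-1) ^ (q.1 + q.2) * s ^ q.1 * t ^ q.2 /
      (4 ^ (q.1 + q.2) * q.1.factorial * q.2.factorial *
        Real.Gamma ((q.1 + q.2 : ℕ) + μ + 1)) : ℝ) : ℂ)))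
  rw [← h'.tsum_eq, besselE, Complex.ofReal_tsum]
  congr 1
  ext n
  rw [(Commute.all s t).add_pow', mul_sum, Complex.ofReal_sum]
  refine sum_congr rfl fun q hq => ?_
  obtain rfl := mem_antidiagonal.1 hq
  congr 1
  rw [nsmul_eq_mul, Nat.cast_add_choose, besselCoeff]
  have : ((q.1 + q.2).factorial : ℝ) ≠ 0 := by positivity
  by_cases hG : Real.Gamma ((q.1 + q.2 : ℕ) + μ + 1) = 0
  · rw [hG]; simp
  field_simp

lemma hasSum_mul_prod {u v : ℕ → ℂ} {x y : ℂ} (hu : HasSum u x) (hv : HasSum v y)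
    (hu' : Summable fun m => ‖u m‖) (hv' : Summable fun k => ‖v k‖) :
    HasSum (fun q : ℕ × ℕ => u q.1 * v q.2) (x * y) :=
  hu.mul hv (summable_mul_of_summable_norm hu' hv')

lemma hasSum_exp_I_mul (c : ℝ) :
    HasSum (fun m : ℕ => (Complex.I * (c : ℂ)) ^ m / (m.factorial : ℂ))
      (Complex.exp (Complex.I * (c : ℂ))) := by
  rw [Complex.exp_eq_exp_ℂ]
  exact NormedSpace.expSeries_div_hasSum_exp _

lemma summable_norm_exp_I_mul (c : ℝ) :
    Summable fun m : ℕ => ‖(Complex.I * (c : ℂ)) ^ m / (m.factorial : ℂ)‖ :=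
  NormedSpace.norm_expSeries_div_summable _

lemma hasSum_exp_mul_besselE (n : ℕ) (μ : ℝ) (hμ : 0 ≤ μ) (c t s : ℝ) :
    HasSum (fun q : ℕ × ℕ => (Complex.I * (c : ℂ)) ^ q.1 / (q.1.factorial : ℂ) *
        ((s ^ n * (besselCoeff μ q.2 * (t * s ^ 2) ^ q.2) : ℝ) : ℂ))
      (Complex.exp (Complex.I * (c : ℂ)) * ((s ^ n * besselE μ (t * s ^ 2) : ℝ) : ℂ)) := by
  have hv : HasSum (fun k : ℕ => ((s ^ n * (besselCoeff μ k * (t * s ^ 2) ^ k) : ℝ) : ℂ))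
      ((s ^ n * besselE μ (t * s ^ 2) : ℝ) : ℂ) :=
    Complex.hasSum_ofReal.2 ((hasSum_besselE μ hμ _).mul_left _)
  have hv' : Summable fun k : ℕ =>
      ‖((s ^ n * (besselCoeff μ k * (t * s ^ 2) ^ k) : ℝ) : ℂ)‖ := by
    simp only [Complex.norm_real, norm_mul (s ^ n)]
    exact (summable_norm_besselCoeff μ hμ _).mul_left _
  have h := hasSum_mul_prod (hasSum_exp_I_mul c) hv (summable_norm_exp_I_mul c) hv'
  exact h

/-- Sonine-type integral raising the order by one half; it is what integrating out one polar angle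
amounts to. -/
lemma integral_exp_cos_mul_besselE (p : ℕ) (a t : ℝ) :
    ∫ θ in (0 : ℝ)..Real.pi, Complex.exp (Complex.I * ((a * Real.cos θ : ℝ) : ℂ)) *
        ((Real.sin θ ^ (p + 1) * besselE ((p : ℝ) / 2) (t * Real.sin θ ^ 2) : ℝ) : ℂ) =
      ((√Real.pi * besselE (((p : ℝ) + 1) / 2) (a ^ 2 + t) : ℝ) : ℂ) := by
  have hμ : (0 : ℝ) ≤ (p : ℝ) / 2 := by positivity
  have hpi : (√Real.pi : ℂ) ≠ 0 := by
    exact_mod_cast (Real.sqrt_pos.2 Real.pi_pos).ne'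
  set F : ℕ × ℕ → ℝ → ℂ := fun q θ =>
    (Complex.I * ((a * Real.cos θ : ℝ) : ℂ)) ^ q.1 / (q.1.factorial : ℂ) *
      ((Real.sin θ ^ (p + 1) *
        (besselCoeff ((p : ℝ) / 2) q.2 * (t * Real.sin θ ^ 2) ^ q.2) : ℝ) : ℂ) with hF
  have hsum : HasSum (fun q => ∫ θ in (0 : ℝ)..Real.pi, F q θ)
      (∫ θ in (0 : ℝ)..Real.pi, Complex.exp (Complex.I * ((a * Real.cos θ : ℝ) : ℂ)) *
        ((Real.sin θ ^ (p + 1) * besselE ((p : ℝ) / 2) (t * Real.sin θ ^ 2) : ℝ) : ℂ)) := by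
    refine intervalIntegral.hasSum_integral_of_dominated_convergence
      (fun q _ => (|a| ^ q.1 / q.1.factorial) * ‖besselCoeff ((p : ℝ) / 2) q.2 * t ^ q.2‖)
      (fun q => Continuous.aestronglyMeasurable (by fun_prop)) (fun q => ?_) ?_ ?_ ?_
    · refine Filter.Eventually.of_forall fun θ _ => ?_
      simp only [hF, norm_mul, norm_div, norm_pow, Complex.norm_I, one_mul, one_pow, Complex.norm_real,
        Complex.norm_natCast, mul_pow, Real.norm_eq_abs]
      have hc : |Real.cos θ| ≤ 1 := Real.abs_cos_le_one θ
      have hs : |Real.sin θ| ≤ 1 := Real.abs_sin_le_one θ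
      have h1 : |a| ^ q.1 * |Real.cos θ| ^ q.1 / (q.1.factorial : ℝ) ≤
          |a| ^ q.1 / q.1.factorial := by
        gcongr
        exact mul_le_of_le_one_right (by positivity) (pow_le_one₀ (abs_nonneg _) hc)
      refine mul_le_mul h1 ?_ (by positivity) (by positivity)
      rw [← one_mul (|besselCoeff ((p : ℝ) / 2) q.2| * |t| ^ q.2)]
      refine mul_le_mul (pow_le_one₀ (abs_nonneg _) hs) ?_ (by positivity) zero_le_one
      gcongr
      exact mul_le_of_le_one_right (by positivity)
        (pow_le_one₀ (by positivity) (pow_le_one₀ (abs_nonneg _) hs))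
    · refine Filter.Eventually.of_forall fun θ _ => ?_
      exact (Real.summable_pow_div_factorial |a|).mul_of_nonneg
        (summable_norm_besselCoeff ((p : ℝ) / 2) hμ t) (fun m => by positivity)
        (fun k => norm_nonneg _)
    · exact intervalIntegrable_const
    · refine Filter.Eventually.of_forall fun θ _ => ?_
      exact hasSum_exp_mul_besselE (p + 1) ((p : ℝ) / 2) hμ (a * Real.cos θ) t (Real.sin θ)
  have hint : ∀ q, ∫ θ in (0 : ℝ)..Real.pi, F q θ =
      Complex.I ^ q.1 * ((a ^ q.1 / q.1.factorial * (besselCoeff ((p : ℝ) / 2) q.2 * t ^ q.2) *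
        ∫ θ in (0 : ℝ)..Real.pi, Real.cos θ ^ q.1 * Real.sin θ ^ (p + 1 + 2 * q.2) : ℝ) : ℂ) := by
    intro q
    rw [Complex.ofReal_mul, ← intervalIntegral.integral_ofReal, ← mul_assoc,
      ← intervalIntegral.integral_const_mul]
    refine intervalIntegral.integral_congr fun θ _ => ?_
    simp only [hF]
    push_cast
    ring
  have hinj : Function.Injective fun q : ℕ × ℕ => (2 * q.1, q.2) := by
    rintro ⟨m, k⟩ ⟨m', k'⟩ h
    simp only [Prod.mk.injEq] at h
    ext <;> simp <;> omega
  -- odd powers of `cos` integrate to zero, so only even powers of `a` survive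
  rw [← hinj.hasSum_iff] at hsum
  · have h3 := hsum.mul_left ((√Real.pi : ℂ)⁻¹)
    have h4 := hasSum_antidiagonal_besselE (((p : ℝ) + 1) / 2) (a ^ 2) t _ (by
      refine h3.congr_fun fun q => ?_
      have e1 : ((p + 1 + 2 * q.2 : ℕ) : ℝ) / 2 = q.2 + ((p : ℝ) + 1) / 2 := by push_cast; ring
      have e2 : (((p + 1 + 2 * q.2 : ℕ) : ℝ) + 1) / 2 = q.2 + (p : ℝ) / 2 + 1 := by
        push_cast; ring
      have e3 : (q.1 : ℝ) + (q.2 + ((p : ℝ) + 1) / 2) + 1 =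
          ((q.1 + q.2 : ℕ) : ℝ) + ((p : ℝ) + 1) / 2 + 1 := by push_cast; ring
      have hG1 : Real.Gamma ((q.2 : ℝ) + (p : ℝ) / 2 + 1) ≠ 0 :=
        (Real.Gamma_pos_of_pos (by positivity)).ne'
      have hG2 : Real.Gamma (((q.1 + q.2 : ℕ) : ℝ) + ((p : ℝ) + 1) / 2 + 1) ≠ 0 :=
        (Real.Gamma_pos_of_pos (by positivity)).ne'
      have hsq : √Real.pi ≠ 0 := (Real.sqrt_pos.2 Real.pi_pos).ne'
      have hI : Complex.I ^ (2 * q.1) = (((-1) ^ q.1 : ℝ) : ℂ) := by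
        rw [pow_mul, Complex.I_sq]; push_cast; rfl
      simp only [Function.comp_apply]
      rw [hint, integral_cos_pow_even_mul_sin_pow, e1, e2, e3, hI, ← Complex.ofReal_mul,
        ← Complex.ofReal_inv, ← Complex.ofReal_mul, besselCoeff]
      congr 1
      field_simp
      ring)
    rw [Complex.ofReal_mul, ← h4]
    field_simp
  · rintro ⟨m, k⟩ hm
    rw [hint, integral_cos_pow_odd_mul_sin_pow]
    · simp
    · by_contra hodd
      obtain ⟨r, hr⟩ := Nat.not_odd_iff_even.1 hodd
      exact hm ⟨(r, k), by simp; omega⟩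


/-! ### The circle -/

/-- Since `cos x = √π E_{-1/2}(x²)`, this is an instance of the contiguous relation
`E_{μ-1}(t) = μ E_μ(t) - t / 4 · E_{μ+1}(t)`. -/
lemma cos_eq_besselE (x : ℝ) :
    2 * Real.cos x = √Real.pi * (besselE (((1 : ℕ) : ℝ) / 2) (x ^ 2) -
      x ^ 2 / 2 * besselE (((3 : ℕ) : ℝ) / 2) (x ^ 2)) := by
  have h1 := (hasSum_besselE (((1 : ℕ) : ℝ) / 2) (by positivity) (x ^ 2))
  have h3 := (hasSum_besselE (((3 : ℕ) : ℝ) / 2) (by positivity) (x ^ 2)).mul_left (x ^ 2 / 2)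
  -- shift the second series by one so that it is a power series in `x ^ 2` again
  have h3' : HasSum (fun k : ℕ => besselCoeff (((1 : ℕ) : ℝ) / 2) k * (x ^ 2) ^ k * (-2 * k))
      (x ^ 2 / 2 * besselE (((3 : ℕ) : ℝ) / 2) (x ^ 2)) := by
    rw [← hasSum_nat_add_iff' 1]
    simp only [sum_range_one, Nat.cast_zero, mul_zero, sub_zero]
    refine h3.congr_fun fun k => ?_
    have e : ((k + 1 : ℕ) : ℝ) + ((1 : ℕ) : ℝ) / 2 + 1 = k + ((3 : ℕ) : ℝ) / 2 + 1 := by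
      push_cast; ring
    have hG : Real.Gamma ((k : ℝ) + ((3 : ℕ) : ℝ) / 2 + 1) ≠ 0 :=
      (Real.Gamma_pos_of_pos (by positivity)).ne'
    rw [besselCoeff, besselCoeff, e, Nat.factorial_succ]
    push_cast at hG ⊢
    field_simp
    ring
  have h := (h1.sub h3').mul_left √Real.pi
  refine ((Real.hasSum_cos x).mul_left 2).unique ?_
  refine h.congr_fun fun k => ?_
  have hsq : √Real.pi ≠ 0 := (Real.sqrt_pos.2 Real.pi_pos).ne'
  -- `Γ(k + 3/2)` in closed form
  have hΓ : Real.Gamma ((k : ℝ) + ((1 : ℕ) : ℝ) / 2 + 1) =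
      (k + 1 / 2) * ((2 * k).factorial / (4 ^ k * k.factorial) * √Real.pi) := by
    have e : (k : ℝ) + ((1 : ℕ) : ℝ) / 2 + 1 = (k + 1 / 2) + 1 := by push_cast; ring
    rw [e, Real.Gamma_add_one (by positivity)]
    congr 1
    clear h h1 h3 h3' e
    induction k with
    | zero => simp [Real.Gamma_one_half_eq, -one_div]
    | succ k ih =>
      rw [show ((k + 1 : ℕ) : ℝ) + 1 / 2 = (k + 1 / 2) + 1 by push_cast; ring,
        Real.Gamma_add_one (by positivity), ih, show 2 * (k + 1) = 2 * k + 1 + 1 by ring,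
        Nat.factorial_succ (2 * k + 1), Nat.factorial_succ (2 * k), Nat.factorial_succ k]
      push_cast
      field_simp
      ring
  rw [besselCoeff, hΓ, ← pow_mul]
  field_simp
  ring

/-- The formula for the circle, in which the last two coordinates are `cos φ` and `sin φ`. -/
lemma integral_circle (a b : ℝ) :
    ∫ φ in Set.Icc (0 : ℝ) (2 * Real.pi),
      Complex.exp (Complex.I * ((a * Real.cos φ + b * Real.sin φ : ℝ) : ℂ)) *
        ((Real.sin φ ^ 2 : ℝ) : ℂ) =
      ((Real.pi * (besselE 1 (a ^ 2 + b ^ 2) - b ^ 2 / 2 * besselE 2 (a ^ 2 + b ^ 2)) : ℝ) : ℂ) := by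
  rw [integral_Icc_eq_integral_Ioc, ← intervalIntegral.integral_of_le (by positivity)]
  have hc : ∀ a b : ℝ, Continuous fun φ : ℝ =>
      Complex.exp (Complex.I * ((a * Real.cos φ + b * Real.sin φ : ℝ) : ℂ)) *
        ((Real.sin φ ^ 2 : ℝ) : ℂ) := fun a b => by fun_prop
  rw [← intervalIntegral.integral_add_adjacent_intervals (b := Real.pi)
    ((hc a b).intervalIntegrable _ _) ((hc a b).intervalIntegrable _ _)]
  -- the lower half circle is the reflection of the upper one
  have hrefl := intervalIntegral.integral_comp_sub_left (fun φ : ℝ =>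
    Complex.exp (Complex.I * ((a * Real.cos φ + b * Real.sin φ : ℝ) : ℂ)) *
        ((Real.sin φ ^ 2 : ℝ) : ℂ)) (2 * Real.pi) (a := 0) (b := Real.pi)
  rw [show 2 * Real.pi - Real.pi = Real.pi by ring, sub_zero] at hrefl
  rw [← hrefl, ← intervalIntegral.integral_add ((hc a b).intervalIntegrable _ _)
    (Continuous.intervalIntegrable (by fun_prop) _ _)]
  have hE1 := integral_exp_cos_mul_besselE 1 a (b ^ 2)
  have hE3 := integral_exp_cos_mul_besselE 3 a (b ^ 2)
  have hc1 := continuous_besselE_sin (((1 : ℕ) : ℝ) / 2) (by positivity) (b ^ 2)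
  have hc3 := continuous_besselE_sin (((3 : ℕ) : ℝ) / 2) (by positivity) (b ^ 2)
  have hkey : ∀ φ : ℝ, Complex.exp (Complex.I * ((a * Real.cos φ + b * Real.sin φ : ℝ) : ℂ)) *
        ((Real.sin φ ^ 2 : ℝ) : ℂ) +
      Complex.exp (Complex.I * ((a * Real.cos (2 * Real.pi - φ) +
        b * Real.sin (2 * Real.pi - φ) : ℝ) : ℂ)) * ((Real.sin (2 * Real.pi - φ) ^ 2 : ℝ) : ℂ) =
      (√Real.pi : ℂ) * (Complex.exp (Complex.I * ((a * Real.cos φ : ℝ) : ℂ)) *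
        ((Real.sin φ ^ (1 + 1) *
          besselE (((1 : ℕ) : ℝ) / 2) (b ^ 2 * Real.sin φ ^ 2) : ℝ) : ℂ)) -
      ((√Real.pi * (b ^ 2 / 2) : ℝ) : ℂ) * (Complex.exp (Complex.I * ((a * Real.cos φ : ℝ) : ℂ)) *
        ((Real.sin φ ^ (3 + 1) *
          besselE (((3 : ℕ) : ℝ) / 2) (b ^ 2 * Real.sin φ ^ 2) : ℝ) : ℂ)) := by
    intro φ
    have hcos := cos_eq_besselE (b * Real.sin φ)
    have hcos' : Complex.exp (Complex.I * ((b * Real.sin φ : ℝ) : ℂ)) +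
        Complex.exp (-(Complex.I * ((b * Real.sin φ : ℝ) : ℂ))) =
        ((2 * Real.cos (b * Real.sin φ) : ℝ) : ℂ) := by
      rw [Complex.ofReal_mul 2, Complex.ofReal_cos, Complex.ofReal_ofNat, Complex.two_cos]
      ring_nf
    rw [hcos, mul_pow] at hcos'
    rw [Real.cos_two_pi_sub, Real.sin_two_pi_sub,
      show Complex.I * ((a * Real.cos φ + b * Real.sin φ : ℝ) : ℂ) =
        Complex.I * ((a * Real.cos φ : ℝ) : ℂ) + Complex.I * ((b * Real.sin φ : ℝ) : ℂ) by
        push_cast; ring,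
      show Complex.I * ((a * Real.cos φ + b * -Real.sin φ : ℝ) : ℂ) =
        Complex.I * ((a * Real.cos φ : ℝ) : ℂ) + -(Complex.I * ((b * Real.sin φ : ℝ) : ℂ)) by
        push_cast; ring, Complex.exp_add, Complex.exp_add, neg_sq]
    generalize Complex.exp (Complex.I * ((b * Real.sin φ : ℝ) : ℂ)) = X at *
    generalize Complex.exp (-(Complex.I * ((b * Real.sin φ : ℝ) : ℂ))) = Y at *
    rw [← add_mul, ← mul_add, hcos']
    push_cast
    ring
  simp only [hkey]
  rw [intervalIntegral.integral_sub (Continuous.intervalIntegrable (by fun_prop) _ _)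
    (Continuous.intervalIntegrable (by fun_prop) _ _), intervalIntegral.integral_const_mul,
    intervalIntegral.integral_const_mul, hE1, hE3]
  rw [← Complex.ofReal_mul, ← Complex.ofReal_mul, ← Complex.ofReal_sub]
  congr 1
  have hpi : √Real.pi * √Real.pi = Real.pi := Real.mul_self_sqrt Real.pi_pos.le
  norm_num
  linear_combination (besselE 1 (a ^ 2 + b ^ 2) - b ^ 2 / 2 * besselE 2 (a ^ 2 + b ^ 2)) * hpi


/-! ### Induction on the dimension -/

/-- The range of the angles: the first `n` in `[0, π]`, the last one in `[0, 2π]`. -/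
def angleBox (n : ℕ) : Set (Fin (n + 1) → ℝ) :=
  {θ | (∀ i : Fin (n + 1), (i : ℕ) < n → θ i ∈ Set.Icc 0 Real.pi) ∧
    θ (Fin.last n) ∈ Set.Icc 0 (2 * Real.pi)}

/-- The inner product of `α` with the point of the unit sphere of `ℝ^(n+2)` whose spherical
coordinates are `θ`. -/
noncomputable def phase (n : ℕ) (α : Fin (n + 2) → ℝ) (θ : Fin (n + 1) → ℝ) : ℝ :=
  (∑ j : Fin (n + 1), α j.castSucc * (∏ i ∈ Finset.Iio j, Real.sin (θ i)) * Real.cos (θ j)) +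
    α (Fin.last (n + 1)) * (∏ i ∈ Finset.Iio (Fin.last n), Real.sin (θ i)) *
      Real.sin (θ (Fin.last n))

/-- The surface density in spherical coordinates times the square of the last coordinate. -/
noncomputable def angleWeight (n : ℕ) (θ : Fin (n + 1) → ℝ) : ℝ :=
  ∏ i : Fin (n + 1), Real.sin (θ i) ^ (n + 2 - (i : ℕ))

lemma prod_Iio_fin_succ {n : ℕ} (f : Fin (n + 1) → ℝ) (j : Fin n) :
    ∏ i ∈ Finset.Iio j.succ, f i = f 0 * ∏ i ∈ Finset.Iio j, f i.succ := by
  have h : ∀ {m : ℕ} (k : Fin m), Finset.Iio k = Finset.univ.filter (· < k) := by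
    intro m k; ext; simp
  rw [h, h, Finset.prod_filter, Finset.prod_filter, Fin.prod_univ_succ]
  simp

lemma phase_cons (n : ℕ) (α : Fin (n + 3) → ℝ) (x : ℝ) (θ : Fin (n + 1) → ℝ) :
    phase (n + 1) α (Fin.cons x θ) =
      α 0 * Real.cos x + phase n (fun j => Real.sin x * α j.succ) θ := by
  have h0 : Finset.Iio (0 : Fin (n + 2)) = ∅ := by ext i; simp
  unfold phase
  rw [Fin.sum_univ_succ, ← Fin.succ_last, ← Fin.succ_last, prod_Iio_fin_succ]
  simp only [prod_Iio_fin_succ, Fin.cons_zero, Fin.cons_succ, h0, prod_empty, Fin.castSucc_zero,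
    ← Fin.succ_castSucc]
  rw [add_assoc, mul_one]
  congr 2
  · exact sum_congr rfl fun j _ => by ring
  · ring

lemma angleWeight_cons (n : ℕ) (x : ℝ) (θ : Fin (n + 1) → ℝ) :
    angleWeight (n + 1) (Fin.cons x θ) = Real.sin x ^ (n + 3) * angleWeight n θ := by
  unfold angleWeight
  rw [Fin.prod_univ_succ]
  simp only [Fin.cons_zero, Fin.cons_succ, Fin.val_zero, Fin.val_succ, Nat.sub_zero]
  congr 1
  refine prod_congr rfl fun i _ => ?_
  congr 1
  omega

lemma isCompact_angleBox (n : ℕ) : IsCompact (angleBox n) := by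
  have h : angleBox n = Set.pi Set.univ (fun i : Fin (n + 1) =>
      if (i : ℕ) < n then Set.Icc 0 Real.pi else Set.Icc 0 (2 * Real.pi)) := by
    ext θ
    simp only [angleBox, Set.mem_ofPred_eq, Set.mem_univ_pi]
    constructor
    · rintro ⟨h1, h2⟩ i
      split_ifs with hi
      · exact h1 i hi
      · rwa [show i = Fin.last n from Fin.ext (by simp; omega)]
    · intro h
      exact ⟨fun i hi => by simpa [hi] using h i, by simpa using h (Fin.last n)⟩
  rw [h]
  refine isCompact_univ_pi fun i => ?_
  split_ifs <;> exact isCompact_Icc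

/-- Fubini: split off the first polar angle. -/
lemma setIntegral_angleBox_succ (n : ℕ) (f : (Fin (n + 2) → ℝ) → ℂ) (hf : Continuous f) :
    ∫ θ in angleBox (n + 1), f θ =
      ∫ x in Set.Icc 0 Real.pi, ∫ θ in angleBox n, f (Fin.cons x θ) := by
  have hmp := volume_preserving_piFinSuccAbove (fun _ : Fin (n + 2) => ℝ) 0
  have hset : angleBox (n + 1) = MeasurableEquiv.piFinSuccAbove (fun _ : Fin (n + 2) => ℝ) 0 ⁻¹'
      (Set.Icc 0 Real.pi ×ˢ angleBox n) := by
    ext θ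
    simp only [angleBox, Set.mem_ofPred_eq, Set.mem_preimage, Set.mem_prod,
      MeasurableEquiv.piFinSuccAbove_apply, Fin.insertNthEquiv_symm_apply, Fin.removeNth_apply,
      Fin.zero_succAbove, Fin.succ_last, Fin.forall_fin_succ (n := n + 1)]
    simp [and_assoc]
  have hcont : Continuous fun y : ℝ × (Fin (n + 1) → ℝ) =>
      f (Fin.cons (α := fun _ => ℝ) y.1 y.2) := by
    refine hf.comp (continuous_pi fun i => ?_)
    refine Fin.cases ?_ (fun j => ?_) i
    · simpa using continuous_fst
    · simp only [Fin.cons_succ]; fun_prop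
  have h := hmp.setIntegral_preimage_emb (MeasurableEquiv.measurableEmbedding _)
    (fun y : ℝ × (Fin (n + 1) → ℝ) => f (Fin.cons (α := fun _ => ℝ) y.1 y.2))
    (Set.Icc 0 Real.pi ×ˢ angleBox n)
  rw [← hset] at h
  have hcons : ∀ θ : Fin (n + 2) → ℝ, Fin.cons (α := fun _ => ℝ)
      (MeasurableEquiv.piFinSuccAbove (fun _ : Fin (n + 2) => ℝ) 0 θ).1
      (MeasurableEquiv.piFinSuccAbove (fun _ : Fin (n + 2) => ℝ) 0 θ).2 = θ := by
    intro θ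
    exact Fin.cons_self_tail θ
  simp only [hcons] at h
  rw [h, Measure.volume_eq_prod, setIntegral_prod]
  rw [← Measure.volume_eq_prod]
  exact hcont.continuousOn.integrableOn_compact (isCompact_Icc.prod (isCompact_angleBox n))

/-- The characteristic function of the weighted surface measure, with the two Bessel functions
written through `besselE`. -/
lemma integral_sphere (n : ℕ) (α : Fin (n + 2) → ℝ) :
    ∫ θ in angleBox n, Complex.exp (Complex.I * (phase n α θ : ℂ)) * (angleWeight n θ : ℂ) =
      ((√Real.pi ^ (n + 2) * (besselE (((n + 2 : ℕ) : ℝ) / 2) (∑ i, α i ^ 2) -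
        α (Fin.last (n + 1)) ^ 2 / 2 * besselE (((n + 4 : ℕ) : ℝ) / 2) (∑ i, α i ^ 2)) : ℝ) : ℂ) := by
  induction n with
  | zero =>
    have hmp := volume_preserving_funUnique (Fin 1) ℝ
    have h := hmp.setIntegral_preimage_emb (MeasurableEquiv.measurableEmbedding _)
      (fun φ : ℝ => Complex.exp (Complex.I * ((α 0 * Real.cos φ + α 1 * Real.sin φ : ℝ) : ℂ)) *
        ((Real.sin φ ^ 2 : ℝ) : ℂ)) (Set.Icc 0 (2 * Real.pi))
    rw [integral_circle] at h
    have hset : angleBox 0 = MeasurableEquiv.funUnique (Fin 1) ℝ ⁻¹'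
        (Set.Icc 0 (2 * Real.pi)) := by
      ext θ
      simp [angleBox]
    rw [← hset] at h
    have h0 : Finset.Iio (0 : Fin 1) = ∅ := by ext i; simp
    have hpi : √Real.pi ^ 2 = Real.pi := Real.sq_sqrt Real.pi_pos.le
    refine Eq.trans ?_ (h.trans ?_)
    · refine integral_congr_ae (Filter.Eventually.of_forall fun θ => ?_)
      simp [phase, angleWeight, h0]
    · simp [Fin.sum_univ_two, hpi]
      norm_num
  | succ n ih =>
    have hc : Continuous fun θ : Fin (n + 2) → ℝ =>
        Complex.exp (Complex.I * (phase (n + 1) α θ : ℂ)) * (angleWeight (n + 1) θ : ℂ) := by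
      unfold phase angleWeight
      fun_prop
    rw [setIntegral_angleBox_succ n _ hc]
    set t : ℝ := ∑ i : Fin (n + 2), α i.succ ^ 2 with ht
    set b : ℝ := α (Fin.last (n + 2)) with hb
    have hlast : α (Fin.last (n + 1)).succ = b := by rw [Fin.succ_last]
    have hinner : ∀ x : ℝ, ∫ θ in angleBox n,
        Complex.exp (Complex.I * (phase (n + 1) α (Fin.cons x θ) : ℂ)) *
          (angleWeight (n + 1) (Fin.cons x θ) : ℂ) =
        ((√Real.pi ^ (n + 2) : ℝ) : ℂ) * (Complex.exp (Complex.I * ((α 0 * Real.cos x : ℝ) : ℂ)) *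
          ((Real.sin x ^ (n + 2 + 1) *
            besselE (((n + 2 : ℕ) : ℝ) / 2) (t * Real.sin x ^ 2) : ℝ) : ℂ)) -
        ((√Real.pi ^ (n + 2) * (b ^ 2 / 2) : ℝ) : ℂ) *
          (Complex.exp (Complex.I * ((α 0 * Real.cos x : ℝ) : ℂ)) *
          ((Real.sin x ^ (n + 4 + 1) *
            besselE (((n + 4 : ℕ) : ℝ) / 2) (t * Real.sin x ^ 2) : ℝ) : ℂ)) := by
      intro x
      have hs : ∑ i : Fin (n + 2), (Real.sin x * α i.succ) ^ 2 = t * Real.sin x ^ 2 := by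
        rw [ht, sum_mul]
        exact sum_congr rfl fun i _ => by ring
      have hih := ih (fun j => Real.sin x * α j.succ)
      simp only [hs, hlast] at hih
      have hsplit : ∀ θ : Fin (n + 1) → ℝ,
          Complex.exp (Complex.I * (phase (n + 1) α (Fin.cons x θ) : ℂ)) *
            (angleWeight (n + 1) (Fin.cons x θ) : ℂ) =
          (Complex.exp (Complex.I * ((α 0 * Real.cos x : ℝ) : ℂ)) *
            ((Real.sin x ^ (n + 3) : ℝ) : ℂ)) *
          (Complex.exp (Complex.I * (phase n (fun j => Real.sin x * α j.succ) θ : ℂ)) *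
            (angleWeight n θ : ℂ)) := by
        intro θ
        rw [phase_cons, angleWeight_cons, Complex.ofReal_add, mul_add, Complex.exp_add,
          Complex.ofReal_mul (Real.sin x ^ (n + 3))]
        ring
      simp only [hsplit]
      rw [integral_const_mul, hih]
      push_cast
      ring
    simp only [hinner]
    have hc1 := continuous_besselE_sin (((n + 2 : ℕ) : ℝ) / 2) (by positivity) t
    have hc3 := continuous_besselE_sin (((n + 4 : ℕ) : ℝ) / 2) (by positivity) t
    rw [integral_Icc_eq_integral_Ioc, ← intervalIntegral.integral_of_le Real.pi_pos.le,
      intervalIntegral.integral_sub (Continuous.intervalIntegrable (by fun_prop) _ _)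
      (Continuous.intervalIntegrable (by fun_prop) _ _), intervalIntegral.integral_const_mul,
      intervalIntegral.integral_const_mul, integral_exp_cos_mul_besselE,
      integral_exp_cos_mul_besselE, ← Complex.ofReal_mul, ← Complex.ofReal_mul,
      ← Complex.ofReal_sub]
    congr 1
    rw [Fin.sum_univ_succ, ← ht, show ((n + 1 + 2 : ℕ) : ℝ) = ((n + 2 : ℕ) : ℝ) + 1 by
      push_cast; ring, show ((n + 1 + 4 : ℕ) : ℝ) = ((n + 4 : ℕ) : ℝ) + 1 by push_cast; ring]
    ring

/-- Statement 12, for `d = d' + 3` (i.e. every integer `d ≥ 3`).  The angular variables are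
`θ i` for `i < d' + 1` (the polar angles, in `[0, π]`) and `φ = θ (Fin.last (d' + 1))`
in `[0, 2π]`; the weight `(sin θ_1)^d ⋯ (sin θ_{d-2})³ sin² φ` is `∏ i, sin (θ i) ^ (d - i)`
in `0`-based indexing. -/
theorem stmt12 (d' : ℕ) (z : ℝ) (hz : 0 < z)
    (α : EuclideanSpace ℝ (Fin (d' + 3))) (hα : α ≠ 0) :
    (∫ θ in {θ : Fin (d' + 2) → ℝ |
        (∀ i : Fin (d' + 2), (i : ℕ) < d' + 1 → θ i ∈ Set.Icc 0 Real.pi) ∧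
        θ (Fin.last (d' + 1)) ∈ Set.Icc 0 (2 * Real.pi)},
      Complex.exp (Complex.I *
        ((z * ((∑ j : Fin (d' + 2),
              α j.castSucc * (∏ i ∈ Finset.Iio j, Real.sin (θ i)) * Real.cos (θ j)) +
            α (Fin.last (d' + 2)) * (∏ i ∈ Finset.Iio (Fin.last (d' + 1)), Real.sin (θ i)) *
              Real.sin (θ (Fin.last (d' + 1)))) : ℝ) : ℂ)) *
      ((Real.Gamma (1 + ((d' : ℝ) + 3) / 2) / Real.pi ^ (((d' : ℝ) + 3) / 2) *
          ∏ i : Fin (d' + 2), Real.sin (θ i) ^ (d' + 3 - (i : ℕ)) : ℝ) : ℂ))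
    = (((2 : ℝ) ^ (((d' : ℝ) + 3) / 2) * Real.Gamma (1 + ((d' : ℝ) + 3) / 2) *
        (besselJ (((d' : ℝ) + 3) / 2) (z * ‖α‖) / (z * ‖α‖) ^ (((d' : ℝ) + 3) / 2) -
          α (Fin.last (d' + 2)) ^ 2 / ‖α‖ ^ 2 *
            (besselJ (((d' : ℝ) + 3) / 2 + 1) (z * ‖α‖) /
              (z * ‖α‖) ^ (((d' : ℝ) + 3) / 2 - 1))) : ℝ) : ℂ) := by
  have hn : 0 < ‖α‖ := norm_pos_iff.2 hα
  have hs : 0 < z * ‖α‖ := mul_pos hz hn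
  set ν : ℝ := ((d' : ℝ) + 3) / 2 with hν
  set C : ℝ := Real.Gamma (1 + ν) / Real.pi ^ ν with hC
  have hsum : ∑ i, (z * α i) ^ 2 = (z * ‖α‖) ^ 2 := by
    rw [mul_pow, EuclideanSpace.real_norm_sq_eq, mul_sum]
    exact sum_congr rfl fun i _ => by ring
  have hmain := integral_sphere (d' + 1) (fun i => z * α i)
  have hint : ∀ θ : Fin (d' + 2) → ℝ, Complex.exp (Complex.I *
        ((z * ((∑ j : Fin (d' + 2),
              α j.castSucc * (∏ i ∈ Finset.Iio j, Real.sin (θ i)) * Real.cos (θ j)) +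
            α (Fin.last (d' + 2)) * (∏ i ∈ Finset.Iio (Fin.last (d' + 1)), Real.sin (θ i)) *
              Real.sin (θ (Fin.last (d' + 1)))) : ℝ) : ℂ)) *
      ((C * ∏ i : Fin (d' + 2), Real.sin (θ i) ^ (d' + 3 - (i : ℕ)) : ℝ) : ℂ) =
      (C : ℂ) * (Complex.exp (Complex.I * (phase (d' + 1) (fun i => z * α i) θ : ℂ)) *
        (angleWeight (d' + 1) θ : ℂ)) := by
    intro θ
    have hp : phase (d' + 1) (fun i => z * α i) θ = z * ((∑ j : Fin (d' + 2),
              α j.castSucc * (∏ i ∈ Finset.Iio j, Real.sin (θ i)) * Real.cos (θ j)) +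
            α (Fin.last (d' + 2)) * (∏ i ∈ Finset.Iio (Fin.last (d' + 1)), Real.sin (θ i)) *
              Real.sin (θ (Fin.last (d' + 1)))) := by
      unfold phase
      rw [mul_add, mul_sum]
      congr 1
      · exact sum_congr rfl fun j _ => by ring
      · ring
    rw [hp, Complex.ofReal_mul C]
    unfold angleWeight
    ring
  simp only [hint]
  rw [integral_const_mul]
  change (C : ℂ) * ∫ θ in angleBox (d' + 1), _ = _
  rw [hmain, hsum, ← Complex.ofReal_mul]
  congr 1
  have e1 : ((d' + 1 + 2 : ℕ) : ℝ) / 2 = ν := by rw [hν]; push_cast; ring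
  have e2 : ((d' + 1 + 4 : ℕ) : ℝ) / 2 = ν + 1 := by rw [hν]; push_cast; ring
  have e3 : √Real.pi ^ (d' + 1 + 2) = Real.pi ^ ν := by
    rw [Real.sqrt_eq_rpow, ← Real.rpow_natCast, ← Real.rpow_mul Real.pi_pos.le, ← e1]
    congr 1
    ring
  have e4 : besselJ (ν + 1) (z * ‖α‖) / (z * ‖α‖) ^ (ν - 1) =
      besselE (ν + 1) ((z * ‖α‖) ^ 2) / (2 ^ ν * 2) * (z * ‖α‖) ^ 2 := by
    have h := besselJ_div_rpow (ν + 1) (z * ‖α‖) hs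
    rw [Real.rpow_add_one (by norm_num : (2 : ℝ) ≠ 0)] at h
    rw [← h, show ν + 1 = (ν - 1) + (2 : ℕ) by push_cast; ring, Real.rpow_add_natCast hs.ne']
    have : (z * ‖α‖) ^ (ν - 1) ≠ 0 := (Real.rpow_pos_of_pos hs _).ne'
    field_simp
  rw [e1, e2, e3, e4, besselJ_div_rpow ν _ hs, hC]
  have h2 : (2 : ℝ) ^ ν ≠ 0 := (Real.rpow_pos_of_pos (by norm_num) _).ne'
  have h3 : Real.pi ^ ν ≠ 0 := (Real.rpow_pos_of_pos Real.pi_pos _).ne'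
  field_simp
end

section
/- Let d ≥ 2 and n ≥ 1 be integers, let a > 0, t > 0, let 0 ≤ j ≤ n+1, and let S be any subset of {1,…,n+1} of cardinality j. With τ_{n+1} := t − (τ_1+⋯+τ_n), the iterated integral ∫₀^t dτ_1 ∫₀^{t−τ_1} dτ_2 ⋯ ∫₀^{t−(τ_1+⋯+τ_{n−1})} dτ_n of ∏_{k=1}^{n+1} τ_k^d · ∏_{k∈S} J_{d/2}(a τ_k)/(a τ_k)^{d/2} · ∏_{k∉S} J_{d/2+1}(a τ_k)/(a τ_k)^{d/2−1} equals ( Γ((d+1)/2)^{n+1} · ((d+1)/2)^{n+1−j} / ( (2π)^{n/2} · Γ( (n+1)(d+3)/2 − j ) ) ) · (a t)^{(n+1)(d+3)/2 − j − 1/2} · a^{1−(n+1)(d+1)} · J_{(n+1)(d+3)/2 − j − 1/2}(a t); in particular the value depends on S only through its cardinality j. -/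
/-!
The integral is an `(n + 1)`-fold convolution, and the functions being convolved are
multiples of `x ^ ν * J_ν(a * x)` with `ν = d / 2` or `ν = d / 2 + 1`. The Laplace transform of such
a function is a constant times `(s² + a²) ^ (-(ν + 1 / 2))`, so convolving them adds the exponents
`ν + 1 / 2` and yields a function of the same family. Only the number of indices of each kind
matters.

No Laplace transform is used in the proof. With `p = 2 * ν`, which is a natural number, `kernel a p`
is the power series `∑ k, choose (-(p + 1) / 2) k * a ^ (2 * k) * t ^ (2 * k + p) / (2 * k + p)!`.
* `integral_kernel_mul_kernel` shows that `kernel a p` convolved with `kernel a q` is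
  `kernel a (p + q + 1)`: termwise this is the Beta integral together with Vandermonde's identity
  for the generalized binomial coefficients.
* `integral_simplex_kernel` iterates it over the simplex by Fubini's theorem.
* `rpow_mul_besselJ` identifies `(a * x) ^ (p / 2) * J_{p/2}(a * x)` with a multiple of
  `kernel a p x`, by Legendre's duplication formula.
-/

open MeasureTheory Finset

/-! ### The kernels and their power series -/

/-- The `k`-th term of the power series of `kernel a p t`. -/
noncomputable def kernelTerm (a : ℝ) (p : ℕ) (t : ℝ) (k : ℕ) : ℝ :=
  Ring.choose (-(((p : ℝ) + 1) / 2)) k * a ^ (2 * k) * (t ^ (2 * k + p) / (2 * k + p).factorial)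

/-- The function of `t` whose Laplace transform is `(s² + a²) ^ (-(p + 1) / 2)`: expand that
transform in powers of `1 / s` and invert term by term. -/
noncomputable def kernel (a : ℝ) (p : ℕ) (t : ℝ) : ℝ := ∑' k, kernelTerm a p t k

theorem choose_real_succ (r : ℝ) (k : ℕ) :
    Ring.choose r (k + 1) = (r - k) / (k + 1) * Ring.choose r k := by
  have h := Ring.choose_smul_choose r (Nat.le_succ k)
  rw [Nat.succ_eq_add_one, Nat.choose_succ_self_right, Nat.add_sub_cancel_left,
    Ring.choose_one_right, nsmul_eq_mul] at h
  push_cast at h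
  have : (k : ℝ) + 1 ≠ 0 := by positivity
  field_simp
  linarith

/-- A crude bound, strong enough to make the kernel series converge like an exponential series. -/
theorem abs_choose_le (p k : ℕ) :
    |Ring.choose (-(((p : ℝ) + 1) / 2)) k| ≤ (2 * k + p).factorial / k.factorial := by
  induction k with
  | zero =>
    have : (1 : ℝ) ≤ p.factorial := by exact_mod_cast Nat.one_le_iff_ne_zero.2 p.factorial_ne_zero
    simpa using this
  | succ k ih =>
    have e : 2 * (k + 1) + p = (2 * k + p) + 1 + 1 := by ring
    rw [choose_real_succ, abs_mul, e, Nat.factorial_succ, Nat.factorial_succ, Nat.factorial_succ]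
    have h1 : |(-(((p : ℝ) + 1) / 2) - k) / (k + 1)| = ((p + 1) / 2 + k) / (k + 1) := by
      rw [abs_div, abs_of_nonpos, abs_of_pos (by positivity)]
      · ring
      · have : (0 : ℝ) ≤ ((p : ℝ) + 1) / 2 + k := by positivity
        linarith
    rw [h1]
    push_cast
    calc ((p + 1 : ℝ) / 2 + k) / (k + 1) * |Ring.choose (-(((p : ℝ) + 1) / 2)) k|
        ≤ ((2 * k + p + 1 + 1) * (2 * k + p + 1)) / (k + 1) *
            ((2 * k + p).factorial / k.factorial) := by
          gcongr
          nlinarith [(Nat.cast_nonneg p : (0 : ℝ) ≤ p), (Nat.cast_nonneg k : (0 : ℝ) ≤ k),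
            mul_nonneg (Nat.cast_nonneg p : (0 : ℝ) ≤ p) (Nat.cast_nonneg k : (0 : ℝ) ≤ k)]
      _ = _ := by
          field_simp

theorem abs_kernelTerm_le (a : ℝ) (p : ℕ) {t R : ℝ} (ht : |t| ≤ R) (k : ℕ) :
    |kernelTerm a p t k| ≤ R ^ p * ((a ^ 2 * R ^ 2) ^ k / k.factorial) := by
  have hf : (0 : ℝ) < (2 * k + p).factorial := by positivity
  have hR : 0 ≤ R := (abs_nonneg t).trans ht
  have ha : |a| ^ (2 * k) = a ^ (2 * k) := by rw [pow_mul, sq_abs, pow_mul]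
  rw [kernelTerm, abs_mul, abs_mul, abs_div, abs_pow, abs_pow, Nat.abs_cast, ha]
  have ha' : 0 ≤ a ^ (2 * k) := by rw [pow_mul]; positivity
  calc _ ≤ ((2 * k + p).factorial / k.factorial) * a ^ (2 * k) *
        (R ^ (2 * k + p) / (2 * k + p).factorial) := by
        gcongr
        exact abs_choose_le p k
    _ = _ := by
        field_simp
        ring

theorem summable_bound (a R : ℝ) (p : ℕ) :
    Summable fun k : ℕ => R ^ p * ((a ^ 2 * R ^ 2) ^ k / k.factorial) :=
  (Real.summable_pow_div_factorial _).mul_left _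

theorem summable_norm_kernelTerm (a : ℝ) (p : ℕ) (t : ℝ) :
    Summable fun k => ‖kernelTerm a p t k‖ :=
  (summable_bound a |t| p).of_nonneg_of_le (fun _ => norm_nonneg _)
    (fun k => abs_kernelTerm_le a p le_rfl k)

@[fun_prop]
theorem continuous_kernelTerm (a : ℝ) (p k : ℕ) : Continuous fun t => kernelTerm a p t k := by
  unfold kernelTerm
  fun_prop

@[fun_prop]
theorem continuous_kernel (a : ℝ) (p : ℕ) : Continuous (kernel a p) := by
  rw [continuous_iff_continuousAt]
  intro t
  have h : ContinuousOn (kernel a p) (Metric.ball 0 (|t| + 1)) :=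
    continuousOn_tsum (fun k => (continuous_kernelTerm a p k).continuousOn)
      (summable_bound a (|t| + 1) p) (fun k x hx =>
        abs_kernelTerm_le a p (by simpa using (mem_ball_zero_iff.1 hx).le) k)
  exact h.continuousAt (Metric.isOpen_ball.mem_nhds (by simp))

/-! ### The convolution identity -/

theorem integral_pow_mul_pow (t : ℝ) (p q : ℕ) :
    ∫ x in (0 : ℝ)..t, (x ^ p / p.factorial) * ((t - x) ^ q / q.factorial)
      = t ^ (p + q + 1) / (p + q + 1).factorial := by
  induction p generalizing q with
  | zero =>
    have h : ∫ x in (0 : ℝ)..t, (t - x) ^ q = t ^ (q + 1) / (q + 1) := by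
      rw [intervalIntegral.integral_comp_sub_left (fun x => x ^ q) t]
      simp
    simp only [pow_zero, Nat.factorial_zero, Nat.cast_one, div_one, one_mul,
      intervalIntegral.integral_div, h, zero_add, Nat.factorial_succ]
    push_cast
    field_simp
  | succ p ih =>
    have hv : ∀ x : ℝ, HasDerivAt (fun x : ℝ => -((t - x) ^ (q + 1) / (q + 1).factorial))
        ((t - x) ^ q / q.factorial) x := by
      intro x
      have := ((((hasDerivAt_id x).const_sub t).pow (q + 1)).div_const
        ((q + 1).factorial : ℝ)).neg
      refine this.congr_deriv ?_
      simp [Nat.factorial_succ]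
      field_simp
    have hu : ∀ x : ℝ, HasDerivAt (fun x : ℝ => x ^ (p + 1) / (p + 1).factorial)
        (x ^ p / p.factorial) x := by
      intro x
      have := ((hasDerivAt_id x).pow (p + 1)).div_const ((p + 1).factorial : ℝ)
      refine this.congr_deriv ?_
      simp [Nat.factorial_succ]
      field_simp
    rw [intervalIntegral.integral_mul_deriv_eq_deriv_mul (fun x _ => hu x) (fun x _ => hv x)
      (Continuous.intervalIntegrable (by fun_prop) _ _)
      (Continuous.intervalIntegrable (by fun_prop) _ _)]
    have e : p + 1 + q + 1 = p + (q + 1) + 1 := by ring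
    simp only [mul_neg, intervalIntegral.integral_neg, ih (q + 1), e]
    simp

/-- Convolving the kernels adds the exponents of their Laplace transforms. The power series are
multiplied and integrated term by term; the coefficients combine by Vandermonde's identity. -/
theorem integral_kernel_mul_kernel (a : ℝ) (p q : ℕ) {t : ℝ} (ht : 0 ≤ t) :
    ∫ x in (0 : ℝ)..t, kernel a p x * kernel a q (t - x) = kernel a (p + q + 1) t := by
  have hP : ∀ r : ℕ, Summable fun k : ℕ => ‖t ^ r * ((a ^ 2 * t ^ 2) ^ k / k.factorial)‖ :=
    fun r => (summable_bound a t r).congr fun k => (Real.norm_of_nonneg (by positivity)).symm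
  have key : HasSum (fun m => ∫ x in (0 : ℝ)..t, ∑ kl ∈ antidiagonal m,
      kernelTerm a p x kl.1 * kernelTerm a q (t - x) kl.2)
      (∫ x in (0 : ℝ)..t, kernel a p x * kernel a q (t - x)) := by
    refine intervalIntegral.hasSum_integral_of_dominated_convergence
      (fun m _ => ∑ kl ∈ antidiagonal m, (t ^ p * ((a ^ 2 * t ^ 2) ^ kl.1 / kl.1.factorial)) *
        (t ^ q * ((a ^ 2 * t ^ 2) ^ kl.2 / kl.2.factorial))) ?_ ?_ ?_ ?_ ?_
    · intro m
      exact Continuous.aestronglyMeasurable (by fun_prop)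
    · refine fun m => Filter.Eventually.of_forall fun x hx => ?_
      rw [Set.uIoc_of_le ht] at hx
      refine (norm_sum_le _ _).trans (sum_le_sum fun kl _ => ?_)
      rw [norm_mul]
      refine mul_le_mul (abs_kernelTerm_le a p ?_ _) (abs_kernelTerm_le a q ?_ _)
        (norm_nonneg _) (by positivity)
      · rw [abs_of_nonneg hx.1.le]; exact hx.2
      · rw [abs_of_nonneg (by linarith [hx.2])]; linarith [hx.1]
    · refine Filter.Eventually.of_forall fun x _ => ?_
      exact (summable_norm_sum_mul_antidiagonal_of_summable_norm (hP p) (hP q)).of_norm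
    · exact intervalIntegrable_const
    · refine Filter.Eventually.of_forall fun x _ => ?_
      have h1 := summable_norm_kernelTerm a p x
      have h2 := summable_norm_kernelTerm a q (t - x)
      rw [kernel, kernel, tsum_mul_tsum_eq_tsum_sum_antidiagonal_of_summable_norm h1 h2]
      exact (summable_norm_sum_mul_antidiagonal_of_summable_norm h1 h2).of_norm.hasSum
  rw [← key.tsum_eq, kernel]
  refine tsum_congr fun m => ?_
  have hterm : ∀ kl ∈ antidiagonal m,
      ∫ x in (0 : ℝ)..t, kernelTerm a p x kl.1 * kernelTerm a q (t - x) kl.2 =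
        Ring.choose (-(((p : ℝ) + 1) / 2)) kl.1 * Ring.choose (-(((q : ℝ) + 1) / 2)) kl.2 *
        (a ^ (2 * m) * (t ^ (2 * m + (p + q + 1)) / (2 * m + (p + q + 1)).factorial)) := by
    intro kl hkl
    have hm : m = kl.1 + kl.2 := (mem_antidiagonal.1 hkl).symm
    have e : 2 * m + (p + q + 1) = (2 * kl.1 + p) + (2 * kl.2 + q) + 1 := by rw [hm]; ring
    rw [e, ← integral_pow_mul_pow, ← intervalIntegral.integral_const_mul,
      ← intervalIntegral.integral_const_mul]
    refine intervalIntegral.integral_congr fun x _ => ?_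
    simp only [kernelTerm, hm]
    ring
  rw [intervalIntegral.integral_finsetSum
    (fun kl _ => Continuous.intervalIntegrable (by fun_prop) _ _), sum_congr rfl hterm,
    ← sum_mul, ← Ring.add_choose_eq m (Commute.all _ _), kernelTerm, mul_assoc]
  congr 2
  push_cast
  ring

/-! ### Iterated convolution over the simplex -/

theorem isOpen_simplex (n : ℕ) (t : ℝ) :
    IsOpen {τ : Fin n → ℝ | (∀ i, 0 < τ i) ∧ ∑ i, τ i < t} := by
  have h1 : IsOpen {τ : Fin n → ℝ | ∀ i, 0 < τ i} := by
    rw [Set.ofPred_forall]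
    exact isOpen_iInter_of_finite fun i => isOpen_lt continuous_const (continuous_apply i)
  have h2 : IsOpen {τ : Fin n → ℝ | ∑ i, τ i < t} := isOpen_lt (by fun_prop) continuous_const
  exact h1.inter h2

theorem simplex_subset_Icc (n : ℕ) (t : ℝ) :
    {τ : Fin n → ℝ | (∀ i, 0 < τ i) ∧ ∑ i, τ i < t} ⊆ Set.Icc 0 (fun _ => t) := by
  rintro τ ⟨h0, h1⟩
  exact ⟨fun i => (h0 i).le, fun i =>
    (single_le_sum (fun k _ => (h0 k).le) (mem_univ i)).trans h1.le⟩

/-- Induction on `n`: integrating out all variables but `τ 0` leaves a convolution of two kernels.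
For `n = 0` the domain is a single point. -/
theorem integral_simplex_kernel (a : ℝ) (n : ℕ) (p : Fin (n + 1) → ℕ) {t : ℝ} (ht : 0 < t) :
    ∫ τ in {τ : Fin n → ℝ | (∀ i, 0 < τ i) ∧ ∑ i, τ i < t},
      ∏ k : Fin (n + 1), kernel a (p k) ((Fin.snoc τ (t - ∑ i, τ i) : Fin (n + 1) → ℝ) k)
      = kernel a (∑ k, p k + n) t := by
  induction n generalizing t with
  | zero =>
    have : {τ : Fin 0 → ℝ | (∀ i, 0 < τ i) ∧ ∑ i, τ i < t} = Set.univ := by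
      ext τ; simp [ht]
    rw [this, Measure.restrict_univ, volume_pi, Measure.pi_of_empty, integral_dirac]
    simp [Fin.snoc]
  | succ n ih =>
    set H : (Fin (n + 1) → ℝ) → ℝ := fun τ =>
      ∏ k : Fin (n + 2), kernel a (p k) ((Fin.snoc τ (t - ∑ i, τ i) : Fin (n + 2) → ℝ) k) with hH
    set D : Set (Fin (n + 1) → ℝ) := {τ | (∀ i, 0 < τ i) ∧ ∑ i, τ i < t} with hD
    have hDm : MeasurableSet D := (isOpen_simplex (n + 1) t).measurableSet
    have hHc : Continuous H := by
      refine continuous_finsetProd _ fun k _ => (continuous_kernel a (p k)).comp ?_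
      have hlast : Continuous fun τ : Fin (n + 1) → ℝ => t - ∑ i, τ i := by fun_prop
      refine Fin.lastCases ?_ (fun i => ?_) k
      · simpa using hlast
      · simpa using continuous_apply i
    have hint : Integrable (D.indicator H) := by
      rw [integrable_indicator_iff hDm]
      exact (hHc.continuousOn.integrableOn_compact isCompact_Icc).mono_set
        (simplex_subset_Icc (n + 1) t)
    have hmp := (volume_preserving_piFinSuccAbove (fun _ : Fin (n + 1) => ℝ) 0).symm
    have hcons : ∀ z : ℝ × (Fin n → ℝ),
        (MeasurableEquiv.piFinSuccAbove (fun _ : Fin (n + 1) => ℝ) 0).symm z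
          = (Fin.cons z.1 z.2 : Fin (n + 1) → ℝ) := by
      intro z
      simp [MeasurableEquiv.piFinSuccAbove_symm_apply]
      rfl
    rw [← hmp.integrable_comp_emb (MeasurableEquiv.measurableEmbedding _)] at hint
    have hslice : ∀ x : ℝ,
        ∫ y : Fin n → ℝ, D.indicator H (Fin.cons x y : Fin (n + 1) → ℝ)
          = (Set.Ioo 0 t).indicator (fun x => kernel a (p 0) x *
              kernel a (∑ k : Fin (n + 1), p k.succ + n) (t - x)) x := by
      intro x
      by_cases hx : x ∈ Set.Ioo 0 t
      · rw [Set.indicator_of_mem hx, ← ih (fun k => p k.succ) (sub_pos.2 hx.2),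
          ← integral_const_mul, ← integral_indicator (isOpen_simplex n (t - x)).measurableSet]
        congr 1
        ext y
        have hmem : (Fin.cons x y : Fin (n + 1) → ℝ) ∈ D ↔
            y ∈ {τ : Fin n → ℝ | (∀ i, 0 < τ i) ∧ ∑ i, τ i < t - x} := by
          simp only [hD, Set.mem_ofPred_eq, Fin.forall_fin_succ, Fin.cons_zero, Fin.cons_succ,
            Fin.sum_univ_succ, hx.1, true_and, lt_sub_iff_add_lt']
        by_cases hy : y ∈ {τ : Fin n → ℝ | (∀ i, 0 < τ i) ∧ ∑ i, τ i < t - x}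
        · rw [Set.indicator_of_mem (hmem.2 hy), Set.indicator_of_mem hy]
          have hs : (Fin.snoc (Fin.cons x y : Fin (n + 1) → ℝ)
              (t - ∑ i, (Fin.cons x y : Fin (n + 1) → ℝ) i) : Fin (n + 2) → ℝ)
              = Fin.cons x (Fin.snoc y (t - x - ∑ i, y i) : Fin (n + 1) → ℝ) := by
            rw [← Fin.cons_snoc_eq_snoc_cons]
            simp [Fin.sum_univ_succ, sub_sub]
          simp only [hH, hs, Fin.prod_univ_succ (n := n + 1), Fin.cons_zero, Fin.cons_succ]
        · rw [Set.indicator_of_notMem (mt hmem.1 hy), Set.indicator_of_notMem hy]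
      · rw [Set.indicator_of_notMem hx]
        refine integral_eq_zero_of_ae (Filter.Eventually.of_forall fun y => ?_)
        refine Set.indicator_of_notMem ?_ _
        rintro ⟨h0, h1⟩
        rw [Fin.sum_univ_succ] at h1
        simp only [Fin.cons_zero, Fin.cons_succ, Fin.forall_fin_succ] at h0 h1
        exact hx ⟨h0.1, lt_of_le_of_lt
          (le_add_of_nonneg_right (sum_nonneg fun i _ => (h0.2 i).le)) h1⟩
    change ∫ τ in D, H τ = _
    rw [← integral_indicator hDm, ← hmp.integral_comp', Measure.volume_eq_prod,
      integral_prod _ (by simpa only [Measure.volume_eq_prod, Function.comp_def] using hint)]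
    simp only [hcons, hslice]
    rw [integral_indicator measurableSet_Ioo, ← integral_Ioc_eq_integral_Ioo,
      ← intervalIntegral.integral_of_le ht.le, integral_kernel_mul_kernel a _ _ ht.le,
      Fin.sum_univ_succ p]
    congr 1
    ring

/-! ### Bessel functions in terms of the kernels -/

/-- The constant in `x ^ (p / 2) * J_{p/2}(x) = besselConst p * kernel 1 p x`. -/
noncomputable def besselConst (p : ℕ) : ℝ :=
  2 ^ ((p : ℝ) / 2) * Real.Gamma (((p : ℝ) + 1) / 2) / √Real.pi

theorem choose_neg_eq_Gamma {α : ℝ} (hα : 0 < α) (k : ℕ) :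
    Ring.choose (-α) k = (-1) ^ k * Real.Gamma (k + α) / (k.factorial * Real.Gamma α) := by
  have hG : Real.Gamma α ≠ 0 := (Real.Gamma_pos_of_pos hα).ne'
  induction k with
  | zero => simp [hG]
  | succ k ih =>
    have h : Real.Gamma (((k + 1 : ℕ) : ℝ) + α) = (k + α) * Real.Gamma (k + α) := by
      rw [← Real.Gamma_add_one (by positivity)]
      push_cast
      ring_nf
    rw [choose_real_succ, ih, h, Nat.factorial_succ]
    push_cast
    field_simp
    ring

/-- Legendre's duplication formula at the arguments occurring in the Bessel series. -/
theorem Gamma_mul_Gamma_duplication (p k : ℕ) :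
    Real.Gamma (k + ((p : ℝ) + 1) / 2) * Real.Gamma (k + (p : ℝ) / 2 + 1)
      = (2 * k + p).factorial / 2 ^ (2 * k + p) * √Real.pi := by
  have h := Real.Gamma_mul_Gamma_add_half (k + ((p : ℝ) + 1) / 2)
  have e1 : (k : ℝ) + ((p : ℝ) + 1) / 2 + 1 / 2 = k + (p : ℝ) / 2 + 1 := by ring
  have e2 : 2 * ((k : ℝ) + ((p : ℝ) + 1) / 2) = ((2 * k + p : ℕ) : ℝ) + 1 := by push_cast; ring
  have e3 : 1 - (((2 * k + p : ℕ) : ℝ) + 1) = -((2 * k + p : ℕ) : ℝ) := by ring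
  rw [e1, e2, Real.Gamma_nat_eq_factorial, e3, Real.rpow_neg (by norm_num),
    Real.rpow_natCast] at h
  rw [h, div_eq_mul_inv]

theorem rpow_mul_besselJ {a x : ℝ} (ha : 0 < a) (hx : 0 < x) (p : ℕ) :
    (a * x) ^ ((p : ℝ) / 2) * besselJ ((p : ℝ) / 2) (a * x)
      = besselConst p * a ^ p * kernel a p x := by
  rw [besselJ, kernel, ← tsum_mul_left, ← tsum_mul_left]
  refine tsum_congr fun k => ?_
  have hax : 0 < a * x := mul_pos ha hx
  have hpow : (a * x) ^ ((p : ℝ) / 2) * (a * x / 2) ^ (2 * (k : ℝ) + (p : ℝ) / 2)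
      = 2 ^ ((p : ℝ) / 2) * (a * x / 2) ^ (2 * k + p) := by
    have e : (a * x) ^ ((p : ℝ) / 2) = 2 ^ ((p : ℝ) / 2) * (a * x / 2) ^ ((p : ℝ) / 2) := by
      rw [← Real.mul_rpow (by norm_num) (by positivity)]
      congr 1
      ring
    rw [e, mul_assoc, ← Real.rpow_add (by positivity), ← Real.rpow_natCast]
    congr 2
    push_cast
    ring
  have hα : 0 < ((p : ℝ) + 1) / 2 := by positivity
  have hdup := Gamma_mul_Gamma_duplication p k
  have hG1 : Real.Gamma (((p : ℝ) + 1) / 2) ≠ 0 := (Real.Gamma_pos_of_pos hα).ne'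
  have hG2 : Real.Gamma (k + (p : ℝ) / 2 + 1) ≠ 0 :=
    (Real.Gamma_pos_of_pos (by positivity)).ne'
  have hπ : √Real.pi ≠ 0 := (Real.sqrt_pos.2 Real.pi_pos).ne'
  rw [← eq_div_iff hG2] at hdup
  calc _ = (-1 : ℝ) ^ k / (k.factorial * Real.Gamma (k + (p : ℝ) / 2 + 1)) *
        ((a * x) ^ ((p : ℝ) / 2) * (a * x / 2) ^ (2 * (k : ℝ) + (p : ℝ) / 2)) := by ring
    _ = _ := by
      rw [hpow, kernelTerm, choose_neg_eq_Gamma hα, hdup, besselConst, div_pow, mul_pow]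
      field_simp
      ring

theorem besselConst_add_two (p : ℕ) :
    besselConst (p + 2) = ((p : ℝ) + 1) * besselConst p := by
  have e1 : ((p + 2 : ℕ) : ℝ) / 2 = (p : ℝ) / 2 + 1 := by push_cast; ring
  have e2 : (((p + 2 : ℕ) : ℝ) + 1) / 2 = ((p : ℝ) + 1) / 2 + 1 := by push_cast; ring
  rw [besselConst, besselConst, e1, e2, Real.rpow_add_one (by norm_num),
    Real.Gamma_add_one (by positivity)]
  ring

theorem factor_mem {a x : ℝ} (ha : 0 < a) (hx : 0 < x) (d : ℕ) :
    x ^ d * (besselJ ((d : ℝ) / 2) (a * x) / (a * x) ^ ((d : ℝ) / 2))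
      = besselConst d * kernel a d x := by
  have hax : 0 < a * x := mul_pos ha hx
  have h := rpow_mul_besselJ ha hx d
  have hr : (0 : ℝ) < (a * x) ^ ((d : ℝ) / 2) := by positivity
  have h2 : (a * x) ^ ((d : ℝ) / 2) * (a * x) ^ ((d : ℝ) / 2) = a ^ d * x ^ d := by
    rw [← Real.rpow_add hax, add_halves, Real.rpow_natCast, mul_pow]
  have hd : a ^ d ≠ 0 := by positivity
  rw [← mul_div_assoc, div_eq_iff hr.ne']
  refine mul_left_cancel₀ (mul_ne_zero hd hr.ne') ?_
  linear_combination (a ^ d * x ^ d) * h - besselConst d * a ^ d * kernel a d x * h2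

theorem factor_notMem {a x : ℝ} (ha : 0 < a) (hx : 0 < x) (d : ℕ) :
    x ^ d * (besselJ ((d : ℝ) / 2 + 1) (a * x) / (a * x) ^ ((d : ℝ) / 2 - 1))
      = besselConst (d + 2) * a ^ 2 * kernel a (d + 2) x := by
  have hax : 0 < a * x := mul_pos ha hx
  have h := rpow_mul_besselJ ha hx (d + 2)
  have e1 : ((d + 2 : ℕ) : ℝ) / 2 = (d : ℝ) / 2 + 1 := by push_cast; ring
  rw [e1] at h
  have hr : (0 : ℝ) < (a * x) ^ ((d : ℝ) / 2 - 1) := by positivity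
  have hr' : (0 : ℝ) < (a * x) ^ ((d : ℝ) / 2 + 1) := by positivity
  have h2 : (a * x) ^ ((d : ℝ) / 2 + 1) * (a * x) ^ ((d : ℝ) / 2 - 1) = a ^ d * x ^ d := by
    rw [← Real.rpow_add hax, ← mul_pow, ← Real.rpow_natCast]
    congr 1
    ring
  have hd : a ^ d ≠ 0 := by positivity
  rw [← mul_div_assoc, div_eq_iff hr.ne']
  refine mul_left_cancel₀ (mul_ne_zero hd hr'.ne') ?_
  linear_combination (a ^ d * x ^ d) * h
    - besselConst (d + 2) * a ^ (d + 2) * kernel a (d + 2) x * h2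

/-- The powers of `2`, `π` and `a` on the two sides agree; `m` is the number of indices outside
the chosen subset. -/
theorem constants_eq {a : ℝ} (ha : 0 < a) (d n m : ℕ) :
    besselConst d ^ (n + 1) * (((d : ℝ) + 1) * a ^ 2) ^ m =
      Real.Gamma (((d : ℝ) + 1) / 2) ^ (n + 1) * (((d : ℝ) + 1) / 2) ^ m /
        ((2 * Real.pi) ^ ((n : ℝ) / 2) *
          Real.Gamma ((((n + 1) * d + 2 * m + n : ℕ) + 1 : ℝ) / 2)) *
      a ^ (1 - ((n : ℝ) + 1) * ((d : ℝ) + 1)) *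
      (besselConst ((n + 1) * d + 2 * m + n) * a ^ ((n + 1) * d + 2 * m + n)) := by
  have hG : Real.Gamma ((((n + 1) * d + 2 * m + n : ℕ) + 1 : ℝ) / 2) ≠ 0 :=
    (Real.Gamma_pos_of_pos (by positivity)).ne'
  have hapow : a ^ (1 - ((n : ℝ) + 1) * ((d : ℝ) + 1)) * a ^ ((n + 1) * d + 2 * m + n)
      = a ^ (2 * m) := by
    rw [← Real.rpow_natCast, ← Real.rpow_natCast, ← Real.rpow_add ha]
    congr 1
    push_cast
    ring
  have h2 : (2 : ℝ) ^ ((((n + 1) * d + 2 * m + n : ℕ) : ℝ) / 2)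
      = ((2 : ℝ) ^ ((d : ℝ) / 2)) ^ (n + 1) * 2 ^ m * 2 ^ ((n : ℝ) / 2) := by
    rw [← Real.rpow_mul_natCast (by norm_num), ← Real.rpow_natCast 2 m,
      ← Real.rpow_add (by norm_num), ← Real.rpow_add (by norm_num)]
    congr 1
    push_cast
    ring
  have hπ : Real.pi ^ ((n : ℝ) / 2) = √Real.pi ^ n := by
    rw [Real.sqrt_eq_rpow, ← Real.rpow_mul_natCast Real.pi_pos.le]
    congr 1
    ring
  have hs : √Real.pi ≠ 0 := (Real.sqrt_pos.2 Real.pi_pos).ne'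
  have h2n : (2 : ℝ) ^ ((n : ℝ) / 2) ≠ 0 := by positivity
  rw [Real.mul_rpow (by norm_num) Real.pi_pos.le, hπ]
  set P := (n + 1) * d + 2 * m + n with hP
  calc _ = Real.Gamma (((d : ℝ) + 1) / 2) ^ (n + 1) * (((d : ℝ) + 1) / 2) ^ m /
        (2 ^ ((n : ℝ) / 2) * √Real.pi ^ n * Real.Gamma (((P : ℝ) + 1) / 2)) *
        a ^ (2 * m) * besselConst P := by
        rw [besselConst, besselConst, h2, div_pow, div_pow, mul_pow, mul_pow, pow_mul a,
          pow_succ (√Real.pi)]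
        field_simp
    _ = _ := by rw [← hapow]; ring

theorem stmt13 (d n : ℕ) (hd : 2 ≤ d) (hn : 1 ≤ n) (a t : ℝ) (ha : 0 < a) (ht : 0 < t)
    (j : ℕ) (hj : j ≤ n + 1) (S : Finset (Fin (n + 1))) (hS : S.card = j) :
    (∫ τ in {τ : Fin n → ℝ | (∀ i, 0 < τ i) ∧ ∑ i, τ i < t},
      (let σ : Fin (n + 1) → ℝ := Fin.snoc τ (t - ∑ i, τ i)
       ∏ k : Fin (n + 1),
        σ k ^ d *
          (if k ∈ S then
            besselJ ((d : ℝ) / 2) (a * σ k) / (a * σ k) ^ ((d : ℝ) / 2)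
          else
            besselJ ((d : ℝ) / 2 + 1) (a * σ k) / (a * σ k) ^ ((d : ℝ) / 2 - 1))))
    = Real.Gamma (((d : ℝ) + 1) / 2) ^ (n + 1) * (((d : ℝ) + 1) / 2) ^ (n + 1 - j) /
        ((2 * Real.pi) ^ ((n : ℝ) / 2) *
          Real.Gamma (((n : ℝ) + 1) * ((d : ℝ) + 3) / 2 - (j : ℝ))) *
      (a * t) ^ (((n : ℝ) + 1) * ((d : ℝ) + 3) / 2 - (j : ℝ) - 1 / 2) *
      a ^ (1 - ((n : ℝ) + 1) * ((d : ℝ) + 1)) *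
      besselJ (((n : ℝ) + 1) * ((d : ℝ) + 3) / 2 - (j : ℝ) - 1 / 2) (a * t) := by
  obtain ⟨m, hm⟩ : ∃ m, n + 1 = j + m := Nat.exists_eq_add_of_le hj
  have hcard : (univ.filter fun k : Fin (n + 1) => k ∉ S).card = m := by
    have h := card_compl S
    rw [Fintype.card_fin] at h
    rw [filter_notMem_eq_sdiff, ← compl_eq_univ_sdiff, h]
    omega
  have hcard' : (univ.filter fun k : Fin (n + 1) => k ∈ S).card = j := by simpa using hS
  set p : Fin (n + 1) → ℕ := fun k => if k ∈ S then d else d + 2 with hp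
  set P := (n + 1) * d + 2 * m + n with hP
  have hsum : ∑ k, p k + n = P := by
    rw [hp, sum_ite, sum_const, sum_const, hcard, hcard', hP, hm]
    simp only [smul_eq_mul]
    ring
  have hPr : (P : ℝ) = ((n : ℝ) + 1) * ((d : ℝ) + 3) - 2 * j - 1 := by
    have hm' : (n : ℝ) + 1 = j + m := by exact_mod_cast hm
    rw [hP]
    push_cast
    linear_combination -2 * hm'
  have e1 : ((n : ℝ) + 1) * ((d : ℝ) + 3) / 2 - (j : ℝ) - 1 / 2 = (P : ℝ) / 2 := by
    rw [hPr]; ring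
  have e2 : ((n : ℝ) + 1) * ((d : ℝ) + 3) / 2 - (j : ℝ) = ((P : ℝ) + 1) / 2 := by
    rw [hPr]; ring
  have hfactor : ∀ τ ∈ {τ : Fin n → ℝ | (∀ i, 0 < τ i) ∧ ∑ i, τ i < t},
      (∏ k : Fin (n + 1), (Fin.snoc τ (t - ∑ i, τ i) : Fin (n + 1) → ℝ) k ^ d *
          (if k ∈ S then
            besselJ ((d : ℝ) / 2) (a * (Fin.snoc τ (t - ∑ i, τ i) : Fin (n + 1) → ℝ) k) /
              (a * (Fin.snoc τ (t - ∑ i, τ i) : Fin (n + 1) → ℝ) k) ^ ((d : ℝ) / 2)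
          else
            besselJ ((d : ℝ) / 2 + 1) (a * (Fin.snoc τ (t - ∑ i, τ i) : Fin (n + 1) → ℝ) k) /
              (a * (Fin.snoc τ (t - ∑ i, τ i) : Fin (n + 1) → ℝ) k) ^ ((d : ℝ) / 2 - 1)))
        = besselConst d ^ (n + 1) * (((d : ℝ) + 1) * a ^ 2) ^ m *
          ∏ k : Fin (n + 1),
            kernel a (p k) ((Fin.snoc τ (t - ∑ i, τ i) : Fin (n + 1) → ℝ) k) := by
    rintro τ ⟨h0, h1⟩
    set σ : Fin (n + 1) → ℝ := Fin.snoc τ (t - ∑ i, τ i) with hσ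
    have hσpos : ∀ k, 0 < σ k := by
      intro k
      refine Fin.lastCases ?_ (fun i => ?_) k
      · simpa [hσ] using h1
      · simpa [hσ] using h0 i
    have hk : ∀ k ∈ univ, σ k ^ d *
          (if k ∈ S then
            besselJ ((d : ℝ) / 2) (a * σ k) / (a * σ k) ^ ((d : ℝ) / 2)
          else
            besselJ ((d : ℝ) / 2 + 1) (a * σ k) / (a * σ k) ^ ((d : ℝ) / 2 - 1))
        = (besselConst d * if k ∉ S then ((d : ℝ) + 1) * a ^ 2 else 1) *
            kernel a (p k) (σ k) := by
      intro k _
      by_cases hkS : k ∈ S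
      · simp only [hp, hkS, if_true, not_true, if_false, mul_one]
        exact factor_mem ha (hσpos k) d
      · simp only [hp, hkS, if_false, not_false_iff, if_true]
        rw [factor_notMem ha (hσpos k) d, besselConst_add_two]
        ring
    rw [prod_congr rfl hk, prod_mul_distrib, prod_mul_distrib, prod_const, card_univ,
      Fintype.card_fin, ← prod_filter, prod_const, hcard]
  have hmj : n + 1 - j = m := by omega
  calc _ = besselConst d ^ (n + 1) * (((d : ℝ) + 1) * a ^ 2) ^ m * kernel a P t := by
        rw [← hsum, ← integral_simplex_kernel a n p ht, ← integral_const_mul]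
        exact setIntegral_congr_fun (isOpen_simplex n t).measurableSet hfactor
    _ = _ := by
        have hJ := rpow_mul_besselJ ha ht P
        rw [e1, e2, hmj, constants_eq ha d n m, ← hP]
        linear_combination -(Real.Gamma (((d : ℝ) + 1) / 2) ^ (n + 1) *
          (((d : ℝ) + 1) / 2) ^ m / ((2 * Real.pi) ^ ((n : ℝ) / 2) *
          Real.Gamma (((P : ℝ) + 1) / 2)) * a ^ (1 - ((n : ℝ) + 1) * ((d : ℝ) + 1))) * hJ
end

section
/- Let d ≥ 2 be an integer, c > 0, t > 0, and for x = (x_1,…,x_d) ∈ ℝ^d with ‖x‖ < ct define p_1^1(x,t) := ( Γ(2(d+1)) / ( π^{(d−1)/2} (2ct)^{2d+1} (d+2) Γ(d+1) Γ((d−1)/2) ) ) · ( (3/(d−1)) (c²t² − ‖x‖²)^{(d+1)/2} − 2 x_d² (c²t² − ‖x‖²)^{(d−1)/2} + (d+1) x_d⁴ (c²t² − ‖x‖²)^{(d−3)/2} ). Then p_1^1(x,t) ≥ 0 for all ‖x‖ < ct and ∫_{‖x‖ < ct} p_1^1(x,t) dx = 1; that is, p_1^1 is a probability density on the open ball of radius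 ct in ℝ^d. -/
/-!
Write `d = n + 1`, `R = c * t`, `u = R ^ 2 - ‖x‖ ^ 2` and `y = x_d ^ 2`.

*Nonnegativity.* The bracket is `u ^ ((d - 3) / 2)` times the quadratic form
`3 / n * u ^ 2 - 2 * y * u + (n + 2) * y ^ 2`, and `n` times this form is the sum of squares
`2 * u ^ 2 + (u - n * y) ^ 2 + 2 * n * y ^ 2`.

*Total mass.* Everything rests on the moments
`∫_{‖x‖ < R} x_i ^ (2k) (R² - ‖x‖²) ^ a dx
  = π ^ (n/2) Γ(k + 1/2) Γ(a + 1) / Γ(a + n/2 + k + 3/2) * R ^ (2a + n + 2k + 1)` for `a > -1`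
(`moment`). They are obtained by slicing one coordinate at a time: the integral over a slice is a
Beta integral (`lintegral_slice`), and it reproduces a function of the same type with `a` raised
by `k + 1/2`, so that Fubini and induction on the dimension apply (`lintegral_split`,
`lintegral_ball`, `lintegral_moment`). All of this is done with `ℝ≥0∞`-valued integrals,
which yields integrability for free, including in dimension two, where the exponent `(d - 3) / 2`
is negative. The three moments `k = 0, 1, 2` with `a = n/2 + 1, n/2, n/2 - 1`, weighted by the
coefficients `3 / n`, `-2` and `n + 2` of the bracket, add up to
`π ^ (d/2) Γ(n/2) (d + 2) R ^ (2d + 1) / Γ(d + 3/2)`, and the duplication formula for `Γ`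
identifies this with the inverse of the normalizing constant.
-/

open MeasureTheory Finset

open scoped ENNReal

/-- The truncated power `v ↦ v₊ ^ b` with values in `ℝ≥0∞`. It vanishes for `v ≤ 0` whatever the
exponent, so that `cutPow a (R ^ 2 - ‖x‖ ^ 2)` is supported in the open ball of radius `R`. -/
noncomputable def cutPow (b v : ℝ) : ℝ≥0∞ := if 0 < v then ENNReal.ofReal (v ^ b) else 0

lemma measurable_cutPow (b : ℝ) : Measurable (cutPow b) :=
  Measurable.ite measurableSet_Ioi (by fun_prop) measurable_const

lemma lintegral_beta {α β : ℝ} (hα : 0 < α) (hβ : 0 < β) :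
    ∫⁻ w in Set.Ioo (0 : ℝ) 1, ENNReal.ofReal (w ^ (α - 1) * (1 - w) ^ (β - 1)) =
      ENNReal.ofReal (ProbabilityTheory.beta α β) := by
  have hB := ProbabilityTheory.beta_pos hα hβ
  have h := ProbabilityTheory.lintegral_betaPDF_eq_one hα hβ
  rw [ProbabilityTheory.lintegral_betaPDF] at h
  calc _ = ∫⁻ w in Set.Ioo (0 : ℝ) 1, ENNReal.ofReal (ProbabilityTheory.beta α β) *
        ENNReal.ofReal (1 / ProbabilityTheory.beta α β * w ^ (α - 1) * (1 - w) ^ (β - 1)) := by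
        refine lintegral_congr fun w => ?_
        rw [← ENNReal.ofReal_mul hB.le]
        congr 1
        field_simp
    _ = _ := by
        rw [lintegral_const_mul' _ _ ENNReal.ofReal_ne_top, h, mul_one]

lemma lintegral_even (g : ℝ → ℝ≥0∞) (hg : ∀ x, g (-x) = g x) :
    ∫⁻ x, g x = 2 * ∫⁻ x in Set.Ioi 0, g x := by
  rw [← lintegral_add_compl g (measurableSet_Ioi (a := (0 : ℝ))), two_mul, Set.compl_Ioi,
    setLIntegral_congr Iio_ae_eq_Iic.symm]
  congr 1
  have h := (Measure.measurePreserving_neg (volume : Measure ℝ)).setLIntegral_comp_preimage_emb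
    (MeasurableEquiv.neg ℝ).measurableEmbedding g (Set.Ioi 0)
  rw [← h]
  simp [hg]

/-- The Beta integral over a slice, by the substitution `x = √u * √w`. -/
lemma lintegral_slice (k : ℕ) {b : ℝ} (hb : -1 < b) (u : ℝ) :
    ∫⁻ x : ℝ, ENNReal.ofReal (x ^ (2 * k)) * cutPow b (u - x ^ 2) =
      ENNReal.ofReal (ProbabilityTheory.beta (k + 1 / 2) (b + 1)) *
        cutPow (b + (k + 1 / 2)) u := by
  rcases le_or_gt u 0 with hu | hu
  · have h0 : ∀ x : ℝ, cutPow b (u - x ^ 2) = 0 := fun x => by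
      rw [cutPow, if_neg]; nlinarith [sq_nonneg x]
    simp only [h0, mul_zero, lintegral_zero]
    simp [cutPow, hu.not_gt]
  rw [lintegral_even _ (fun x => by simp [pow_mul])]
  have hs : 0 < √u := Real.sqrt_pos.2 hu
  have himg : (fun w => √u * √w) '' Set.Ioo 0 1 = Set.Ioo 0 √u := by
    ext x
    constructor
    · rintro ⟨w, ⟨h0, h1⟩, rfl⟩
      have : 0 < √w := Real.sqrt_pos.2 h0
      have h2 : √w < 1 := by rw [Real.sqrt_lt' one_pos]; simpa
      exact ⟨by positivity, by nlinarith⟩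
    · rintro ⟨h0, h1⟩
      refine ⟨(x / √u) ^ 2, ⟨by positivity, ?_⟩, ?_⟩
      · rw [sq_lt_one_iff₀ (by positivity), div_lt_one hs]; exact h1
      · simp only
        rw [Real.sqrt_sq (by positivity)]
        field_simp
  have hcut : ∫⁻ x in Set.Ioi (0 : ℝ), ENNReal.ofReal (x ^ (2 * k)) * cutPow b (u - x ^ 2) =
      ∫⁻ x in Set.Ioo (0 : ℝ) √u, ENNReal.ofReal (x ^ (2 * k)) * cutPow b (u - x ^ 2) := by
    rw [← lintegral_indicator measurableSet_Ioi, ← lintegral_indicator measurableSet_Ioo]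
    refine lintegral_congr fun x => ?_
    by_cases hx1 : x ∈ Set.Ioo 0 √u
    · rw [Set.indicator_of_mem hx1, Set.indicator_of_mem (show x ∈ Set.Ioi 0 from hx1.1)]
    rw [Set.indicator_of_notMem hx1]
    by_cases hx0 : x ∈ Set.Ioi 0
    swap
    · rw [Set.indicator_of_notMem hx0]
    rw [Set.indicator_of_mem hx0]
    have hx0' : 0 < x := hx0
    have : √u ≤ x := by
      by_contra hc
      exact hx1 ⟨hx0, not_le.1 hc⟩
    rw [cutPow, if_neg, mul_zero]
    rw [Real.sqrt_le_left hx0'.le] at this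
    linarith
  rw [hcut, ← himg, lintegral_image_eq_lintegral_abs_deriv_mul measurableSet_Ioo
    (f' := fun w => √u * (1 / (2 * √w)))]
  rotate_left
  · intro w hw
    exact ((Real.hasDerivAt_sqrt hw.1.ne').const_mul _).hasDerivWithinAt
  · intro v hv w hw h
    have := mul_left_cancel₀ hs.ne' h
    rwa [Real.sqrt_inj hv.1.le hw.1.le] at this
  have hint : ∀ w ∈ Set.Ioo (0 : ℝ) 1,
      ENNReal.ofReal |√u * (1 / (2 * √w))| * (ENNReal.ofReal ((√u * √w) ^ (2 * k)) *
        cutPow b (u - (√u * √w) ^ 2)) =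
      ENNReal.ofReal (1 / 2 * u ^ (b + (k + 1 / 2))) *
        ENNReal.ofReal (w ^ ((k + 1 / 2 : ℝ) - 1) * (1 - w) ^ (b + 1 - 1)) := by
    rintro w ⟨h0, h1⟩
    have hw : 0 < √w := Real.sqrt_pos.2 h0
    have e : u - (√u * √w) ^ 2 = u * (1 - w) := by
      rw [mul_pow, Real.sq_sqrt hu.le, Real.sq_sqrt h0.le]; ring
    have h1' : 0 < 1 - w := by linarith
    rw [e, cutPow, if_pos (by positivity), abs_of_pos (by positivity),
      ← ENNReal.ofReal_mul (by positivity), ← ENNReal.ofReal_mul (by positivity),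
      ← ENNReal.ofReal_mul (by positivity)]
    congr 1
    rw [Real.mul_rpow hu.le h1'.le, mul_pow, pow_mul, pow_mul, Real.sq_sqrt hu.le,
      Real.sq_sqrt h0.le, Real.rpow_add hu, Real.rpow_add hu, Real.rpow_natCast,
      ← Real.sqrt_eq_rpow, add_sub_cancel_right,
      show (k + 1 / 2 : ℝ) - 1 = k + -(1 / 2) by ring, Real.rpow_add h0, Real.rpow_natCast,
      Real.rpow_neg h0.le, ← Real.sqrt_eq_rpow]
    field_simp
  rw [setLIntegral_congr_fun measurableSet_Ioo hint,
    lintegral_const_mul' _ _ ENNReal.ofReal_ne_top, lintegral_beta (by positivity) (by linarith),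
    cutPow, if_pos hu, ENNReal.ofReal_mul (by norm_num), ← mul_assoc, ← mul_assoc]
  have h2 : (2 : ℝ≥0∞) * ENNReal.ofReal (1 / 2) = 1 := by
    rw [show (2 : ℝ≥0∞) = ENNReal.ofReal 2 by simp, ← ENNReal.ofReal_mul (by norm_num)]
    norm_num
  rw [h2, one_mul, mul_comm]

/-- Fubini along the `i`-th coordinate: if integrating `cutPow a` over `n` variables gives
`C * cutPow e`, then one more variable, weighted by its `2k`-th power, contributes a further Beta
factor and raises the exponent by `k + 1 / 2`. -/
lemma lintegral_split (n k : ℕ) (i : Fin (n + 1)) {a C : ℝ} (e : ℝ) (he : -1 < e)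
    (ih : ∀ u, ∫⁻ y : Fin n → ℝ, cutPow a (u - ∑ j, y j ^ 2) = ENNReal.ofReal C * cutPow e u)
    (u : ℝ) :
    ∫⁻ x : Fin (n + 1) → ℝ, ENNReal.ofReal (x i ^ (2 * k)) * cutPow a (u - ∑ j, x j ^ 2) =
      ENNReal.ofReal C * (ENNReal.ofReal (ProbabilityTheory.beta (k + 1 / 2) (e + 1)) *
        cutPow (e + (k + 1 / 2)) u) := by
  have hm := measurable_cutPow a
  let F : ℝ × (Fin n → ℝ) → ℝ≥0∞ := fun p =>
    ENNReal.ofReal (p.1 ^ (2 * k)) * cutPow a (u - p.1 ^ 2 - ∑ j, p.2 j ^ 2)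
  have hF : Measurable F := by
    refine Measurable.mul (by fun_prop) (hm.comp (by fun_prop))
  have hpre := (volume_preserving_piFinSuccAbove (fun _ : Fin (n + 1) => ℝ) i).lintegral_comp hF
  calc _ = ∫⁻ x : Fin (n + 1) → ℝ, F (MeasurableEquiv.piFinSuccAbove (fun _ => ℝ) i x) := by
        refine lintegral_congr fun x => ?_
        simp only [F, Fin.sum_univ_succAbove _ i, MeasurableEquiv.piFinSuccAbove,
          MeasurableEquiv.coe_mk, Fin.insertNthEquiv, Equiv.coe_fn_symm_mk, Fin.removeNth, sub_sub]
    _ = _ := by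
        rw [hpre, Measure.volume_eq_prod, lintegral_prod _ hF.aemeasurable]
        have : ∀ x : ℝ, ∫⁻ y : Fin n → ℝ, F (x, y) = ENNReal.ofReal C *
            (ENNReal.ofReal (x ^ (2 * k)) * cutPow e (u - x ^ 2)) := fun x => by
          simp only [F]
          rw [lintegral_const_mul' _ _ ENNReal.ofReal_ne_top, ih]
          ring
        simp_rw [this]
        rw [lintegral_const_mul' _ _ ENNReal.ofReal_ne_top, lintegral_slice k he]

/-- The Dirichlet integral over the ball of radius `√u` in dimension `n`. -/
lemma lintegral_ball (n : ℕ) {a : ℝ} (ha : -1 < a) (u : ℝ) :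
    ∫⁻ y : Fin n → ℝ, cutPow a (u - ∑ j, y j ^ 2) =
      ENNReal.ofReal (Real.pi ^ ((n : ℝ) / 2) * Real.Gamma (a + 1) /
        Real.Gamma (a + n / 2 + 1)) * cutPow (a + n / 2) u := by
  induction n generalizing u with
  | zero =>
    have := (Real.Gamma_pos_of_pos (show 0 < a + 1 by linarith)).ne'
    simp [this, Measure.volume_pi_eq_dirac (0 : Fin 0 → ℝ)]
  | succ n ih =>
    have h1 : (0 : ℝ) < a + 1 := by linarith
    have hn : (0 : ℝ) ≤ (n : ℝ) / 2 := by positivity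
    have h := lintegral_split n 0 0 (a + n / 2) (by linarith) ih u
    simp only [mul_zero, pow_zero, ENNReal.ofReal_one, one_mul, Nat.cast_zero, zero_add] at h
    have g1 := Real.Gamma_pos_of_pos h1
    have g2 := Real.Gamma_pos_of_pos (show 0 < a + n / 2 + 1 by linarith)
    rw [h, ← mul_assoc, ← ENNReal.ofReal_mul (by positivity), ProbabilityTheory.beta,
      Real.Gamma_one_half_eq]
    push_cast
    rw [show a + ((n : ℝ) + 1) / 2 = a + n / 2 + 1 / 2 by ring,
      show (1 / 2 + (a + (n : ℝ) / 2 + 1)) = a + n / 2 + 1 / 2 + 1 by ring,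
      show ((n : ℝ) + 1) / 2 = n / 2 + 1 / 2 by ring, Real.rpow_add Real.pi_pos,
      ← Real.sqrt_eq_rpow]
    congr 2
    generalize Real.Gamma (a + n / 2 + 1) = G at *
    field_simp

lemma lintegral_moment (n k : ℕ) (i : Fin (n + 1)) {a : ℝ} (ha : -1 < a) (u : ℝ) :
    ∫⁻ x : Fin (n + 1) → ℝ, ENNReal.ofReal (x i ^ (2 * k)) * cutPow a (u - ∑ j, x j ^ 2) =
      ENNReal.ofReal (Real.pi ^ ((n : ℝ) / 2) * Real.Gamma (k + 1 / 2) * Real.Gamma (a + 1) /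
        Real.Gamma (a + n / 2 + k + 3 / 2)) * cutPow (a + n / 2 + (k + 1 / 2)) u := by
  have h1 : (0 : ℝ) < a + 1 := by linarith
  have hn : (0 : ℝ) ≤ (n : ℝ) / 2 := by positivity
  have g1 := Real.Gamma_pos_of_pos h1
  have g2 := Real.Gamma_pos_of_pos (show 0 < a + n / 2 + 1 by linarith)
  rw [lintegral_split n k i (a + n / 2) (by linarith) (lintegral_ball n ha) u, ← mul_assoc,
    ← ENNReal.ofReal_mul (by positivity), ProbabilityTheory.beta,
    show (k + 1 / 2 + (a + (n : ℝ) / 2 + 1)) = a + n / 2 + k + 3 / 2 by ring]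
  congr 2
  generalize Real.Gamma (a + n / 2 + 1) = G at *
  field_simp

/-- The even moments of one coordinate under the weight `(R ^ 2 - ‖x‖ ^ 2) ^ a` on the ball. -/
lemma moment (n k : ℕ) (i : Fin (n + 1)) {a R : ℝ} (ha : -1 < a) (hR : 0 < R) :
    IntegrableOn (fun x : EuclideanSpace ℝ (Fin (n + 1)) =>
        x i ^ (2 * k) * (R ^ 2 - ‖x‖ ^ 2) ^ a) (Metric.ball 0 R) ∧
    ∫ x in Metric.ball (0 : EuclideanSpace ℝ (Fin (n + 1))) R,
        x i ^ (2 * k) * (R ^ 2 - ‖x‖ ^ 2) ^ a =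
      Real.pi ^ ((n : ℝ) / 2) * Real.Gamma (k + 1 / 2) * Real.Gamma (a + 1) /
        Real.Gamma (a + n / 2 + k + 3 / 2) * (R ^ 2) ^ (a + n / 2 + (k + 1 / 2)) := by
  have hn : (0 : ℝ) ≤ (n : ℝ) / 2 := by positivity
  have hk : (0 : ℝ) ≤ k := by positivity
  have g1 := Real.Gamma_pos_of_pos (show 0 < a + 1 by linarith)
  have g2 := Real.Gamma_pos_of_pos (show 0 < a + n / 2 + k + 3 / 2 by linarith)
  have g3 := Real.Gamma_pos_of_pos (show (0 : ℝ) < k + 1 / 2 by linarith)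
  have hmem : ∀ x : EuclideanSpace ℝ (Fin (n + 1)), x ∈ Metric.ball 0 R ↔ 0 < R ^ 2 - ‖x‖ ^ 2 := by
    intro x
    rw [mem_ball_zero_iff, sub_pos, sq_lt_sq₀ (norm_nonneg _) hR.le]
  have hL : ∫⁻ x in Metric.ball (0 : EuclideanSpace ℝ (Fin (n + 1))) R,
        ENNReal.ofReal (x i ^ (2 * k) * (R ^ 2 - ‖x‖ ^ 2) ^ a) =
      ENNReal.ofReal (Real.pi ^ ((n : ℝ) / 2) * Real.Gamma (k + 1 / 2) * Real.Gamma (a + 1) /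
        Real.Gamma (a + n / 2 + k + 3 / 2) * (R ^ 2) ^ (a + n / 2 + (k + 1 / 2))) := by
    have h := lintegral_moment n k i ha (R ^ 2)
    rw [cutPow, if_pos (by positivity), ← ENNReal.ofReal_mul (by positivity)] at h
    rw [← h, ← (PiLp.volume_preserving_ofLp (Fin (n + 1))).lintegral_comp_emb
      (MeasurableEquiv.toLp 2 (Fin (n + 1) → ℝ)).symm.measurableEmbedding,
      ← lintegral_indicator Metric.isOpen_ball.measurableSet]
    refine lintegral_congr fun x => ?_
    have hnx : ∑ j, x j ^ 2 = ‖x‖ ^ 2 := by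
      rw [EuclideanSpace.norm_sq_eq]; simp
    rw [hnx]
    by_cases hx : x ∈ Metric.ball 0 R
    · rw [Set.indicator_of_mem hx, cutPow, if_pos ((hmem x).1 hx),
        ENNReal.ofReal_mul (by rw [pow_mul]; positivity)]
    · rw [Set.indicator_of_notMem hx, cutPow, if_neg (fun h => hx ((hmem x).2 h)), mul_zero]
  have hnn : 0 ≤ᵐ[volume.restrict (Metric.ball (0 : EuclideanSpace ℝ (Fin (n + 1))) R)]
      fun x => x i ^ (2 * k) * (R ^ 2 - ‖x‖ ^ 2) ^ a := by
    filter_upwards [ae_restrict_mem Metric.isOpen_ball.measurableSet] with x hx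
    have := (hmem x).1 hx
    simp only [Pi.zero_apply, pow_mul]
    positivity
  have hmeas : Measurable fun x : EuclideanSpace ℝ (Fin (n + 1)) =>
      x i ^ (2 * k) * (R ^ 2 - ‖x‖ ^ 2) ^ a := by fun_prop
  refine ⟨⟨hmeas.aestronglyMeasurable, ?_⟩, ?_⟩
  · rw [hasFiniteIntegral_iff_ofReal hnn, hL]
    exact ENNReal.ofReal_lt_top
  · rw [integral_eq_lintegral_of_nonneg_ae hnn hmeas.aestronglyMeasurable, hL,
      ENNReal.toReal_ofReal (by positivity)]

theorem stmt17 (d : ℕ) (hd : 2 ≤ d) (c t : ℝ) (hc : 0 < c) (ht : 0 < t) :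
    (∀ x : EuclideanSpace ℝ (Fin d), ‖x‖ < c * t →
      0 ≤ Real.Gamma (2 * ((d : ℝ) + 1)) /
            (Real.pi ^ (((d : ℝ) - 1) / 2) * (2 * c * t) ^ (2 * d + 1) * ((d : ℝ) + 2) *
              Real.Gamma ((d : ℝ) + 1) * Real.Gamma (((d : ℝ) - 1) / 2)) *
          (3 / ((d : ℝ) - 1) * (c ^ 2 * t ^ 2 - ‖x‖ ^ 2) ^ (((d : ℝ) + 1) / 2) -
            2 * x ⟨d - 1, by omega⟩ ^ 2 * (c ^ 2 * t ^ 2 - ‖x‖ ^ 2) ^ (((d : ℝ) - 1) / 2) +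
            ((d : ℝ) + 1) * x ⟨d - 1, by omega⟩ ^ 4 *
              (c ^ 2 * t ^ 2 - ‖x‖ ^ 2) ^ (((d : ℝ) - 3) / 2))) ∧
    (∫ x in Metric.ball (0 : EuclideanSpace ℝ (Fin d)) (c * t),
      Real.Gamma (2 * ((d : ℝ) + 1)) /
          (Real.pi ^ (((d : ℝ) - 1) / 2) * (2 * c * t) ^ (2 * d + 1) * ((d : ℝ) + 2) *
            Real.Gamma ((d : ℝ) + 1) * Real.Gamma (((d : ℝ) - 1) / 2)) *
        (3 / ((d : ℝ) - 1) * (c ^ 2 * t ^ 2 - ‖x‖ ^ 2) ^ (((d : ℝ) + 1) / 2) -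
          2 * x ⟨d - 1, by omega⟩ ^ 2 * (c ^ 2 * t ^ 2 - ‖x‖ ^ 2) ^ (((d : ℝ) - 1) / 2) +
          ((d : ℝ) + 1) * x ⟨d - 1, by omega⟩ ^ 4 *
            (c ^ 2 * t ^ 2 - ‖x‖ ^ 2) ^ (((d : ℝ) - 3) / 2))) = 1 := by
  obtain ⟨n, rfl⟩ : ∃ n, d = n + 1 := ⟨d - 1, by omega⟩
  -- Only the dimension matters below, not which coordinate is singled out.
  generalize hi : (⟨n + 1 - 1, by omega⟩ : Fin (n + 1)) = i
  clear hi
  have hn1 : (1 : ℝ) ≤ n := by exact_mod_cast (by omega : 1 ≤ n)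
  have hn0 : (0 : ℝ) < n := by linarith
  have hR : 0 < c * t := mul_pos hc ht
  push_cast
  rw [show c ^ 2 * t ^ 2 = (c * t) ^ 2 by ring, show 2 * c * t = 2 * (c * t) by ring]
  generalize c * t = R at *
  rw [show (n : ℝ) + 1 - 1 = n by ring, show ((n : ℝ) + 1 - 3) / 2 = n / 2 - 1 by ring,
    show ((n : ℝ) + 1 + 1) / 2 = n / 2 + 1 by ring]
  have gpos : 0 < Real.Gamma ((n : ℝ) / 2) := Real.Gamma_pos_of_pos (by positivity)
  constructor
  · intro x hx
    have hu : 0 < R ^ 2 - ‖x‖ ^ 2 := by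
      rw [sub_pos]; exact (sq_lt_sq₀ (norm_nonneg _) hR.le).2 hx
    generalize R ^ 2 - ‖x‖ ^ 2 = u at *
    have ga : 0 < Real.Gamma (2 * ((n : ℝ) + 1 + 1)) := Real.Gamma_pos_of_pos (by positivity)
    have gb : 0 < Real.Gamma ((n : ℝ) + 1 + 1) := Real.Gamma_pos_of_pos (by positivity)
    refine mul_nonneg (by positivity) ?_
    have e1 : u ^ ((n : ℝ) / 2 + 1) = u ^ ((n : ℝ) / 2 - 1) * u ^ 2 := by
      rw [← Real.rpow_natCast, ← Real.rpow_add hu]; congr 1; push_cast; ring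
    have e2 : u ^ ((n : ℝ) / 2) = u ^ ((n : ℝ) / 2 - 1) * u := by
      nth_rewrite 3 [← Real.rpow_one u]
      rw [← Real.rpow_add hu]; congr 1; ring
    rw [e1, e2]
    have hq : 0 ≤ 3 / (n : ℝ) * u ^ 2 - 2 * x i ^ 2 * u + ((n : ℝ) + 1 + 1) * x i ^ 4 := by
      have : 3 / (n : ℝ) * u ^ 2 - 2 * x i ^ 2 * u + ((n : ℝ) + 1 + 1) * x i ^ 4 =
          (2 * u ^ 2 + (u - n * x i ^ 2) ^ 2 + 2 * n * x i ^ 4) / n := by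
        field_simp; ring
      rw [this]; positivity
    calc (0 : ℝ) ≤ u ^ ((n : ℝ) / 2 - 1) * (3 / (n : ℝ) * u ^ 2 - 2 * x i ^ 2 * u +
          ((n : ℝ) + 1 + 1) * x i ^ 4) := by positivity
      _ = _ := by ring
  · obtain ⟨I0, V0⟩ := moment n 0 i (a := n / 2 + 1) (by linarith) hR
    obtain ⟨I1, V1⟩ := moment n 1 i (a := n / 2) (by linarith) hR
    obtain ⟨I2, V2⟩ := moment n 2 i (a := n / 2 - 1) (by linarith) hR
    simp only [mul_zero, pow_zero, one_mul, mul_one, Nat.reduceMul] at I0 V0 I1 V1 I2 V2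
    simp only [mul_assoc _ (_ ^ 2) (_ ^ _), mul_assoc _ (_ ^ 4) (_ ^ _)]
    rw [integral_const_mul, integral_add, integral_sub, integral_const_mul, integral_const_mul,
      integral_const_mul, V0, V1, V2]
    rotate_left
    · exact I0.const_mul _
    · exact I1.const_mul _
    · exact (I0.const_mul _).sub (I1.const_mul _)
    · exact I2.const_mul _
    push_cast
    -- The duplication formula at `d + 1 = n + 2`.
    have gd := Real.Gamma_mul_Gamma_add_half ((n : ℝ) + 2)
    have gG : Real.Gamma ((n : ℝ) / 2 + 1) = n / 2 * Real.Gamma (n / 2) :=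
      Real.Gamma_add_one (by positivity)
    have gG2 : Real.Gamma ((n : ℝ) / 2 + 1 + 1) = (n / 2 + 1) * (n / 2 * Real.Gamma (n / 2)) := by
      rw [Real.Gamma_add_one (by positivity), gG]
    have h3 : Real.Gamma (1 + 1 / 2 : ℝ) = 1 / 2 * √Real.pi := by
      rw [add_comm, Real.Gamma_add_one (by norm_num), Real.Gamma_one_half_eq]
    have h5 : Real.Gamma (2 + 1 / 2 : ℝ) = 3 / 4 * √Real.pi := by
      rw [show (2 + 1 / 2 : ℝ) = (1 + 1 / 2) + 1 by norm_num, Real.Gamma_add_one (by norm_num), h3]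
      ring
    have hpow : (R ^ 2) ^ ((n : ℝ) + 3 / 2) = R ^ (2 * (n + 1) + 1) := by
      rw [← Real.rpow_natCast R 2, ← Real.rpow_mul hR.le, ← Real.rpow_natCast]
      congr 1; push_cast; ring
    rw [show (n : ℝ) / 2 + 1 + n / 2 + 0 + 3 / 2 = n + 2 + 1 / 2 by ring,
      show (n : ℝ) / 2 + n / 2 + 1 + 3 / 2 = n + 2 + 1 / 2 by ring,
      show (n : ℝ) / 2 - 1 + n / 2 + 2 + 3 / 2 = n + 2 + 1 / 2 by ring,
      show (n : ℝ) / 2 + 1 + n / 2 + (0 + 1 / 2) = n + 3 / 2 by ring,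
      show (n : ℝ) / 2 + n / 2 + (1 + 1 / 2) = n + 3 / 2 by ring,
      show (n : ℝ) / 2 - 1 + n / 2 + (2 + 1 / 2) = n + 3 / 2 by ring, hpow, zero_add,
      sub_add_cancel, Real.Gamma_one_half_eq, h3, h5, gG, gG2,
      show (n : ℝ) + 1 + 1 = n + 2 by ring, mul_pow]
    have h2 : (2 : ℝ) ^ (1 - 2 * ((n : ℝ) + 2)) = ((2 : ℝ) ^ (2 * (n + 1) + 1))⁻¹ := by
      rw [← Real.rpow_natCast, ← Real.rpow_neg (by norm_num)]
      congr 1; push_cast; ring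
    rw [h2] at gd
    have ga : 0 < Real.Gamma (2 * ((n : ℝ) + 2)) := Real.Gamma_pos_of_pos (by positivity)
    have gb : 0 < Real.Gamma ((n : ℝ) + 2) := Real.Gamma_pos_of_pos (by positivity)
    have gc : 0 < Real.Gamma ((n : ℝ) + 2 + 1 / 2) := Real.Gamma_pos_of_pos (by positivity)
    have hpi : 0 < Real.pi ^ ((n : ℝ) / 2) := Real.rpow_pos_of_pos Real.pi_pos _
    have hsp : 0 < √Real.pi := Real.sqrt_pos.2 Real.pi_pos
    have hRp : 0 < R ^ (2 * (n + 1) + 1) := by positivity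
    have h2p : (0 : ℝ) < 2 ^ (2 * (n + 1) + 1) := by positivity
    clear I0 I1 I2 V0 V1 V2 h2 hpow gG gG2 h3 h5
    generalize Real.Gamma (2 * ((n : ℝ) + 2)) = A at *
    generalize Real.Gamma ((n : ℝ) + 2 + 1 / 2) = B at *
    generalize Real.Gamma ((n : ℝ) + 2) = D at *
    generalize Real.Gamma ((n : ℝ) / 2) = G at *
    generalize Real.pi ^ ((n : ℝ) / 2) = P at *
    generalize √Real.pi = Q at *
    generalize R ^ (2 * (n + 1) + 1) = S at *
    generalize (2 : ℝ) ^ (2 * (n + 1) + 1) = T at *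
    have hA : A = D * B * T / Q := by
      rw [gd]; field_simp
    rw [hA]
    field_simp
    ring
end

section
/- Let d ≥ 2 be an integer, c > 0, t > 0, and for x = (x_1,…,x_d) ∈ ℝ^d with ‖x‖ < ct define p_2^1(x,t) := ( Γ(3d+3)·(d+1) / ( π^{(d−1)/2} (2ct)^{3d+2} Γ(d−1) Γ(3(d+3)/2 − 3) (3d+7)(3d+5) ) ) · ( (4(d+4)/((d+1)d(d−1))) (c²t² − ‖x‖²)^{d+1} + (2(6d²+6d+8)/((d+1)d(d−1))) x_d² (c²t² − ‖x‖²)^{d} − 8 x_d⁴ (c²t² − ‖x‖²)^{d−1} + (8/3)(d+1) x_d⁶ (c²t² − ‖x‖²)^{d−2} ). Then p_2^1(x,t) ≥ 0 for all ‖x‖ < ct and ∫_{‖x‖ < ct} p_2^1(x,t) dx = 1; that is, p_2^1 is a probability density on the open ball of radius ct in ℝ^d. -/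
/-!
Every term of the density is a constant times `x_d ^ (2k) * (R² - ‖x‖²) ^ m` with `R = ct` and
`k + m = d + 1`, and the moment of such a term over the ball of radius `R` is
`R ^ (d+2k+2m) π^((d-1)/2) Γ(k+1/2) m! / Γ(d/2+k+m+1)` (`integral_ball_moment`). In polar
coordinates the moment is a spherical integral of `u_d ^ (2k)` times a radial beta integral
(`integral_coord_pow_mul_radial`, `integral_radial_beta`); the spherical factor is found by
evaluating the same formula on the Gaussian weight `exp (-‖x‖²)`, whose integral factorises over
the coordinates. All four moments have the same `R`-power and the same denominator
`Γ(3d/2+2)`, the numerical coefficients add up to `(3d+5)(3d+7)/(d+1)`, and Legendre's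
duplication formula at `(3d+3)/2` shows that the total mass is `1`.

For nonnegativity, with `A = R² - ‖x‖² > 0` and `y = x_d²`, the last three terms are
`A^(d-2) y` times a quadratic form in `(A, y)` with negative discriminant.
-/

open MeasureTheory Finset

lemma integral_pow_mul_exp_neg_sq (n : ℕ) :
    ∫ r in Set.Ioi (0 : ℝ), r ^ n * Real.exp (-r ^ 2) = Real.Gamma (((n : ℝ) + 1) / 2) / 2 := by
  have h := integral_rpow_mul_exp_neg_rpow (p := 2) (q := n) (by norm_num)
    (by have : (0 : ℝ) ≤ n := n.cast_nonneg
        linarith)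
  have h2 : ∀ r : ℝ, r ^ (2 : ℝ) = r ^ 2 := fun r => by
    exact_mod_cast Real.rpow_natCast r 2
  simp only [h2, Real.rpow_natCast] at h
  rw [h]
  ring

lemma integral_even_pow_mul_exp_neg_sq (k : ℕ) :
    ∫ r : ℝ, r ^ (2 * k) * Real.exp (-r ^ 2) = Real.Gamma ((k : ℝ) + 1 / 2) := by
  have h := integral_comp_abs (f := fun r : ℝ => r ^ (2 * k) * Real.exp (-r ^ 2))
  simp only [sq_abs, (even_two_mul k).pow_abs] at h
  rw [h, integral_pow_mul_exp_neg_sq]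
  push_cast
  rw [show ((2 : ℝ) * k + 1) / 2 = k + 1 / 2 by ring]
  ring

lemma integral_coord_pow_mul_gaussian {d : ℕ} (i : Fin d) (k : ℕ) :
    ∫ x : EuclideanSpace ℝ (Fin d), x i ^ (2 * k) * Real.exp (-‖x‖ ^ 2) =
      Real.pi ^ (((d : ℝ) - 1) / 2) * Real.Gamma ((k : ℝ) + 1 / 2) := by
  rw [← (PiLp.volume_preserving_toLp (Fin d)).integral_comp
    (MeasurableEquiv.toLp 2 (Fin d → ℝ)).measurableEmbedding]
  have h1 : ∀ x : Fin d → ℝ,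
      (WithLp.toLp 2 x : EuclideanSpace ℝ (Fin d)) i ^ (2 * k) *
        Real.exp (-‖(WithLp.toLp 2 x : EuclideanSpace ℝ (Fin d))‖ ^ 2) =
      ∏ j, (fun (j : Fin d) (y : ℝ) =>
        y ^ (if j = i then 2 * k else 0) * Real.exp (-y ^ 2)) j (x j) := by
    intro x
    rw [EuclideanSpace.real_norm_sq_eq, ← Finset.sum_neg_distrib, Real.exp_sum,
      Finset.prod_mul_distrib]
    congr 1
    rw [Finset.prod_eq_single i]
    · simp
    · intro j _ hj
      simp [hj]
    · simp
  simp_rw [h1]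
  rw [integral_fintype_prod_volume_eq_prod (f := fun (j : Fin d) (y : ℝ) =>
    y ^ (if j = i then 2 * k else 0) * Real.exp (-y ^ 2))]
  have h0 := integral_even_pow_mul_exp_neg_sq 0
  have hk := integral_even_pow_mul_exp_neg_sq k
  rw [← Finset.mul_prod_erase _ _ (Finset.mem_univ i)]
  simp only [if_true]
  rw [hk, Finset.prod_congr rfl (g := fun _ => Real.pi ^ (1 / 2 : ℝ))]
  · rw [Finset.prod_const, Finset.card_erase_of_mem (Finset.mem_univ i), Finset.card_univ,
      Fintype.card_fin, ← Real.rpow_natCast, ← Real.rpow_mul Real.pi_pos.le, mul_comm]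
    congr 2
    rw [Nat.cast_sub (Nat.one_le_of_lt i.2)]
    push_cast
    ring
  · intro j hj
    have hj' : j ≠ i := Finset.ne_of_mem_erase hj
    simp only [hj', if_false]
    have : Real.Gamma (((0 : ℕ) : ℝ) + 1 / 2) = Real.pi ^ (1 / 2 : ℝ) := by
      rw [← Real.sqrt_eq_rpow, ← Real.Gamma_one_half_eq]
      simp
    rw [← this, ← h0]

/-- Polar coordinates for a power of a coordinate times a radial function. The integral over the
unit sphere does not depend on the radial function. -/
lemma integral_coord_pow_mul_radial {d : ℕ} (i : Fin d) (n : ℕ) (g : ℝ → ℝ) :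
    ∫ x : EuclideanSpace ℝ (Fin d), x i ^ n * g ‖x‖ =
      (∫ u : Metric.sphere (0 : EuclideanSpace ℝ (Fin d)) 1,
        (u : EuclideanSpace ℝ (Fin d)) i ^ n ∂(volume : Measure
          (EuclideanSpace ℝ (Fin d))).toSphere) *
      ∫ r in Set.Ioi (0 : ℝ), r ^ (d - 1 + n) * g r := by
  have : Nonempty (Fin d) := ⟨i⟩
  set E := EuclideanSpace ℝ (Fin d)
  let μ : Measure E := volume
  have hdim : Module.finrank ℝ E = d := by simp [E]
  calc
    ∫ x : E, x i ^ n * g ‖x‖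
        = ∫ x : ({(0)}ᶜ : Set E), (x.1 i ^ n * g ‖x.1‖) ∂(μ.comap (↑)) := by
      rw [integral_subtype_comap (measurableSet_singleton _).compl
        fun x : E => x i ^ n * g ‖x‖, restrict_compl_singleton]
    _ = ∫ z : Metric.sphere (0 : E) 1 × Set.Ioi (0 : ℝ),
          (z.1 : E) i ^ n * ((z.2 : ℝ) ^ n * g z.2)
            ∂μ.toSphere.prod (.volumeIoiPow (Module.finrank ℝ E - 1)) := by
      rw [← μ.measurePreserving_homeomorphUnitSphereProd.integral_comp
        (Homeomorph.measurableEmbedding _)]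
      refine integral_congr_ae (Filter.Eventually.of_forall fun x => ?_)
      have hx : ‖x.1‖ ≠ 0 := by
        rw [norm_ne_zero_iff]
        exact x.2
      simp only [homeomorphUnitSphereProd_apply_snd_coe, homeomorphUnitSphereProd_apply_fst_coe]
      have hs : (‖x.1‖⁻¹ • x.1 : E) i = ‖x.1‖⁻¹ * x.1 i := rfl
      rw [hs, mul_pow, inv_pow]
      field_simp
    _ = (∫ u : Metric.sphere (0 : E) 1, (u : E) i ^ n ∂μ.toSphere) *
          ∫ r : Set.Ioi (0 : ℝ), ((r : ℝ) ^ n * g r)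
            ∂.volumeIoiPow (Module.finrank ℝ E - 1) :=
      integral_prod_mul (fun u : Metric.sphere (0 : E) 1 => (u : E) i ^ n)
        (fun r : Set.Ioi (0 : ℝ) => (r : ℝ) ^ n * g r)
    _ = _ := by
      congr 1
      simp only [Measure.volumeIoiPow, ENNReal.ofReal]
      rw [integral_withDensity_eq_integral_smul,
        integral_subtype_comap measurableSet_Ioi
          fun a : ℝ => Real.toNNReal (a ^ (Module.finrank ℝ E - 1)) • (a ^ n * g a),
        setIntegral_congr_fun measurableSet_Ioi fun x hx => ?_]
      · rw [NNReal.smul_def, Real.coe_toNNReal _ (pow_nonneg hx.out.le _), hdim, smul_eq_mul,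
          pow_add, mul_assoc]
      · exact (measurable_subtype_coe.pow_const _).real_toNNReal

/-- Induction on `m`: integrating the derivative of `r ^ (n+1) * (R² - r²) ^ (m+1)`, which vanishes
at both endpoints, relates the exponents `(n, m+1)` and `(n+2, m)`. -/
lemma integral_radial_beta (R : ℝ) (n m : ℕ) :
    ∫ r in (0 : ℝ)..R, r ^ n * (R ^ 2 - r ^ 2) ^ m =
      R ^ (n + 2 * m + 1) * (Real.Gamma (((n : ℝ) + 1) / 2) * Nat.factorial m /
        (2 * Real.Gamma (((n : ℝ) + 1) / 2 + m + 1))) := by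
  induction m generalizing n with
  | zero =>
    have hn : (0 : ℝ) < ((n : ℝ) + 1) / 2 := by positivity
    have hG := Real.Gamma_pos_of_pos hn
    simp only [pow_zero, mul_one, integral_pow]
    rw [Nat.cast_zero, add_zero, Real.Gamma_add_one hn.ne']
    simp
    field_simp
  | succ m ih =>
    have key : ∫ r in (0 : ℝ)..R, (((n : ℝ) + 1) * (r ^ n * (R ^ 2 - r ^ 2) ^ (m + 1)) -
        2 * ((m : ℝ) + 1) * (r ^ (n + 2) * (R ^ 2 - r ^ 2) ^ m)) = 0 := by
      rw [intervalIntegral.integral_eq_sub_of_hasDerivAt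
        (f := fun r : ℝ => r ^ (n + 1) * (R ^ 2 - r ^ 2) ^ (m + 1))]
      · simp
      · intro r _
        have h := (hasDerivAt_pow (n + 1) r).mul
          (((hasDerivAt_pow 2 r).const_sub (R ^ 2)).pow (m + 1))
        refine h.congr_deriv ?_
        push_cast
        simp
        ring
      · exact Continuous.intervalIntegrable (by fun_prop) _ _
    rw [intervalIntegral.integral_sub
      (Continuous.intervalIntegrable (by fun_prop) _ _)
      (Continuous.intervalIntegrable (by fun_prop) _ _),
      intervalIntegral.integral_const_mul, intervalIntegral.integral_const_mul, ih (n + 2)] at key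
    have hn : (0 : ℝ) < ((n : ℝ) + 1) / 2 := by positivity
    have hG1 : Real.Gamma ((((n + 2 : ℕ) : ℝ) + 1) / 2) =
        ((n : ℝ) + 1) / 2 * Real.Gamma (((n : ℝ) + 1) / 2) := by
      rw [← Real.Gamma_add_one hn.ne']
      push_cast
      ring_nf
    have hG2 : (((n + 2 : ℕ) : ℝ) + 1) / 2 + m + 1 = ((n : ℝ) + 1) / 2 + (m + 1 : ℕ) + 1 := by
      push_cast
      ring
    rw [hG1, hG2] at key
    have hpos : 0 < Real.Gamma (((n : ℝ) + 1) / 2 + (m + 1 : ℕ) + 1) :=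
      Real.Gamma_pos_of_pos (by positivity)
    have hn1 : (n : ℝ) + 1 ≠ 0 := by positivity
    apply mul_left_cancel₀ hn1
    rw [sub_eq_zero.mp key, Nat.factorial_succ]
    push_cast
    ring

lemma integral_ball_moment {d : ℕ} (i : Fin d) (R : ℝ) (hR : 0 < R) (k m : ℕ) :
    ∫ x in Metric.ball (0 : EuclideanSpace ℝ (Fin d)) R, x i ^ (2 * k) * (R ^ 2 - ‖x‖ ^ 2) ^ m =
      R ^ (d + 2 * k + 2 * m) * (Real.pi ^ (((d : ℝ) - 1) / 2) * Real.Gamma ((k : ℝ) + 1 / 2) *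
        Nat.factorial m / Real.Gamma ((d : ℝ) / 2 + k + m + 1)) := by
  have hd : 1 ≤ d := Nat.one_le_of_lt i.2
  have hgauss := integral_coord_pow_mul_radial i (2 * k) (fun r => Real.exp (-r ^ 2))
  rw [integral_coord_pow_mul_gaussian, integral_pow_mul_exp_neg_sq] at hgauss
  have hball := integral_coord_pow_mul_radial i (2 * k)
    ((Set.Iio R).indicator fun r => (R ^ 2 - r ^ 2) ^ m)
  have hL : ∫ x in Metric.ball (0 : EuclideanSpace ℝ (Fin d)) R,
      x i ^ (2 * k) * (R ^ 2 - ‖x‖ ^ 2) ^ m =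
      ∫ x : EuclideanSpace ℝ (Fin d),
        x i ^ (2 * k) * (Set.Iio R).indicator (fun r => (R ^ 2 - r ^ 2) ^ m) ‖x‖ := by
    rw [← integral_indicator Metric.isOpen_ball.measurableSet]
    refine integral_congr_ae (Filter.Eventually.of_forall fun x => ?_)
    by_cases hx : ‖x‖ < R <;> simp [Set.indicator, hx]
  have hradial : ∫ r in Set.Ioi (0 : ℝ),
      r ^ (d - 1 + 2 * k) * (Set.Iio R).indicator (fun r => (R ^ 2 - r ^ 2) ^ m) r =
      ∫ r in (0 : ℝ)..R, r ^ (d - 1 + 2 * k) * (R ^ 2 - r ^ 2) ^ m := by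
    rw [intervalIntegral.integral_of_le hR.le, integral_Ioc_eq_integral_Ioo,
      ← Set.Ioi_inter_Iio, ← setIntegral_indicator measurableSet_Iio]
    refine integral_congr_ae (Filter.Eventually.of_forall fun r => ?_)
    by_cases hr : r < R <;> simp [Set.indicator, hr]
  rw [hL, hball, hradial, integral_radial_beta]
  have hcast : (((d - 1 + 2 * k : ℕ) : ℝ) + 1) / 2 = (d : ℝ) / 2 + k := by
    push_cast [Nat.cast_sub hd]
    ring
  rw [hcast] at hgauss ⊢
  have hexp : d - 1 + 2 * k + 2 * m + 1 = d + 2 * k + 2 * m := by omega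
  rw [hexp, hgauss]
  ring

lemma density_bracket_nonneg (d : ℕ) (hd : 2 ≤ d) (A z : ℝ) (hA : 0 < A) :
    0 ≤ 4 * ((d : ℝ) + 4) / (((d : ℝ) + 1) * (d : ℝ) * ((d : ℝ) - 1)) * A ^ (d + 1) +
        2 * (6 * (d : ℝ) ^ 2 + 6 * (d : ℝ) + 8) / (((d : ℝ) + 1) * (d : ℝ) * ((d : ℝ) - 1)) *
          z ^ 2 * A ^ d -
        8 * z ^ 4 * A ^ (d - 1) +
        8 / 3 * ((d : ℝ) + 1) * z ^ 6 * A ^ (d - 2) := by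
  obtain ⟨e, rfl⟩ := Nat.exists_eq_add_of_le' hd
  have he : (0 : ℝ) ≤ e := e.cast_nonneg
  simp only [show e + 2 - 1 = e + 1 by omega, show e + 2 - 2 = e by omega]
  push_cast
  have h1 : (e : ℝ) + 2 - 1 = e + 1 := by ring
  rw [h1]
  -- the lower bound `12 / (d + 1)` for the second coefficient already makes the discriminant negative
  have hb : 12 / ((e : ℝ) + 3) ≤ 2 * (6 * ((e : ℝ) + 2) ^ 2 + 6 * ((e : ℝ) + 2) + 8) /
      (((e : ℝ) + 2 + 1) * ((e : ℝ) + 2) * ((e : ℝ) + 1)) := by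
    rw [div_le_div_iff₀ (by positivity) (by positivity)]
    have h3 : 0 ≤ ((e : ℝ) + 3) * (24 * e + 64) := by positivity
    nlinarith [h3]
  have ha : 0 ≤ 4 * ((e : ℝ) + 2 + 4) / (((e : ℝ) + 2 + 1) * ((e : ℝ) + 2) * ((e : ℝ) + 1)) := by
    positivity
  set a := 4 * ((e : ℝ) + 2 + 4) / (((e : ℝ) + 2 + 1) * ((e : ℝ) + 2) * ((e : ℝ) + 1))
  set b := 2 * (6 * ((e : ℝ) + 2) ^ 2 + 6 * ((e : ℝ) + 2) + 8) /
      (((e : ℝ) + 2 + 1) * ((e : ℝ) + 2) * ((e : ℝ) + 1))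
  have hq : 0 ≤ b * A ^ 2 - 8 * z ^ 2 * A + 8 / 3 * ((e : ℝ) + 3) * (z ^ 2) ^ 2 := by
    have h2 : 12 / ((e : ℝ) + 3) * A ^ 2 ≤ b * A ^ 2 := by gcongr
    have h3 : 0 ≤ 12 / ((e : ℝ) + 3) * A ^ 2 - 8 * z ^ 2 * A +
        8 / 3 * ((e : ℝ) + 3) * (z ^ 2) ^ 2 := by
      have h4 : 12 / ((e : ℝ) + 3) * A ^ 2 - 8 * z ^ 2 * A +
          8 / 3 * ((e : ℝ) + 3) * (z ^ 2) ^ 2 =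
          (12 * (A - ((e : ℝ) + 3) * z ^ 2 / 3) ^ 2 +
            4 / 3 * (((e : ℝ) + 3) * z ^ 2) ^ 2) / ((e : ℝ) + 3) := by
        field_simp
        ring
      rw [h4]
      positivity
    linarith
  have hfac : a * A ^ (e + 2 + 1) + b * z ^ 2 * A ^ (e + 2) - 8 * z ^ 4 * A ^ (e + 1) +
      8 / 3 * ((e : ℝ) + 2 + 1) * z ^ 6 * A ^ e =
      A ^ e * (a * A ^ 3 + z ^ 2 *
        (b * A ^ 2 - 8 * z ^ 2 * A + 8 / 3 * ((e : ℝ) + 3) * (z ^ 2) ^ 2)) := by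
    ring
  rw [hfac]
  positivity

/-- The four moments of the density, added up; the coefficients collapse to
`(3d+5)(3d+7)/(d+1)`. -/
lemma integral_density_bracket (d : ℕ) (hd : 2 ≤ d) (i : Fin d) (R : ℝ) (hR : 0 < R) :
    ∫ x in Metric.ball (0 : EuclideanSpace ℝ (Fin d)) R,
      (4 * ((d : ℝ) + 4) / (((d : ℝ) + 1) * (d : ℝ) * ((d : ℝ) - 1)) *
          (R ^ 2 - ‖x‖ ^ 2) ^ (d + 1) +
        2 * (6 * (d : ℝ) ^ 2 + 6 * (d : ℝ) + 8) / (((d : ℝ) + 1) * (d : ℝ) * ((d : ℝ) - 1)) *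
          x i ^ 2 * (R ^ 2 - ‖x‖ ^ 2) ^ d -
        8 * x i ^ 4 * (R ^ 2 - ‖x‖ ^ 2) ^ (d - 1) +
        8 / 3 * ((d : ℝ) + 1) * x i ^ 6 * (R ^ 2 - ‖x‖ ^ 2) ^ (d - 2)) =
      R ^ (3 * d + 2) * (Real.pi ^ (((d : ℝ) - 1) / 2) * Real.sqrt Real.pi *
        Real.Gamma ((d : ℝ) - 1) / Real.Gamma (3 * (d : ℝ) / 2 + 2)) *
        ((3 * (d : ℝ) + 5) * (3 * (d : ℝ) + 7) / ((d : ℝ) + 1)) := by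
  have hIntegrable : ∀ (a : ℝ) (k m : ℕ), IntegrableOn
      (fun x : EuclideanSpace ℝ (Fin d) => a * (x i ^ (2 * k) * (R ^ 2 - ‖x‖ ^ 2) ^ m))
      (Metric.ball 0 R) := by
    intro a k m
    refine IntegrableOn.mono_set ?_ Metric.ball_subset_closedBall
    exact ContinuousOn.integrableOn_compact (isCompact_closedBall _ _)
      (Continuous.continuousOn (by fun_prop))
  have h0 := integral_ball_moment i R hR 0 (d + 1)
  have h1 := integral_ball_moment i R hR 1 d
  have h2 := integral_ball_moment i R hR 2 (d - 1)
  have h3 := integral_ball_moment i R hR 3 (d - 2)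
  set a := 4 * ((d : ℝ) + 4) / (((d : ℝ) + 1) * (d : ℝ) * ((d : ℝ) - 1)) with ha
  set b := 2 * (6 * (d : ℝ) ^ 2 + 6 * (d : ℝ) + 8) / (((d : ℝ) + 1) * (d : ℝ) * ((d : ℝ) - 1))
    with hb
  have hsplit : ∀ x : EuclideanSpace ℝ (Fin d),
      a * (R ^ 2 - ‖x‖ ^ 2) ^ (d + 1) + b * x i ^ 2 * (R ^ 2 - ‖x‖ ^ 2) ^ d -
        8 * x i ^ 4 * (R ^ 2 - ‖x‖ ^ 2) ^ (d - 1) +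
        8 / 3 * ((d : ℝ) + 1) * x i ^ 6 * (R ^ 2 - ‖x‖ ^ 2) ^ (d - 2) =
      a * (x i ^ (2 * 0) * (R ^ 2 - ‖x‖ ^ 2) ^ (d + 1)) +
        b * (x i ^ (2 * 1) * (R ^ 2 - ‖x‖ ^ 2) ^ d) -
        8 * (x i ^ (2 * 2) * (R ^ 2 - ‖x‖ ^ 2) ^ (d - 1)) +
        (8 / 3 * ((d : ℝ) + 1)) * (x i ^ (2 * 3) * (R ^ 2 - ‖x‖ ^ 2) ^ (d - 2)) := by
    intro x
    ring
  simp_rw [hsplit]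
  have hadd := (hIntegrable a 0 (d + 1)).add (hIntegrable b 1 d)
  have hsub := hadd.sub (hIntegrable 8 2 (d - 1))
  rw [integral_add (by exact hsub) (hIntegrable _ _ _), integral_sub (by exact hadd) (hIntegrable _ _ _),
    integral_add (hIntegrable _ _ _) (hIntegrable _ _ _)]
  simp only [integral_const_mul]
  rw [h0, h1, h2, h3]
  obtain ⟨e, rfl⟩ := Nat.exists_eq_add_of_le' hd
  have he : (0 : ℝ) ≤ e := e.cast_nonneg
  simp only [show e + 2 - 1 = e + 1 by omega, show e + 2 - 2 = e by omega]
  have hG0 : Real.Gamma (((0 : ℕ) : ℝ) + 1 / 2) = Real.sqrt Real.pi := by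
    rw [← Real.Gamma_one_half_eq]
    simp
  have hG1 : Real.Gamma (((1 : ℕ) : ℝ) + 1 / 2) = 1 / 2 * Real.sqrt Real.pi := by
    rw [← Real.Gamma_one_half_eq, ← Real.Gamma_add_one (by norm_num)]
    norm_num
  have hG2 : Real.Gamma (((2 : ℕ) : ℝ) + 1 / 2) = 3 / 4 * Real.sqrt Real.pi := by
    rw [show (((2 : ℕ) : ℝ) + 1 / 2) = (((1 : ℕ) : ℝ) + 1 / 2) + 1 by norm_num,
      Real.Gamma_add_one (by norm_num), hG1]
    push_cast
    ring
  have hG3 : Real.Gamma (((3 : ℕ) : ℝ) + 1 / 2) = 15 / 8 * Real.sqrt Real.pi := by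
    rw [show (((3 : ℕ) : ℝ) + 1 / 2) = (((2 : ℕ) : ℝ) + 1 / 2) + 1 by norm_num,
      Real.Gamma_add_one (by norm_num), hG2]
    push_cast
    ring
  have hGd : Real.Gamma (((e + 2 : ℕ) : ℝ) - 1) = Nat.factorial e := by
    rw [← Real.Gamma_nat_eq_factorial]
    push_cast
    ring_nf
  rw [hG0, hG1, hG2, hG3, hGd]
  have hden : ∀ k m : ℕ, k + m = e + 3 →
      ((e + 2 : ℕ) : ℝ) / 2 + k + m + 1 = 3 * ((e + 2 : ℕ) : ℝ) / 2 + 2 := by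
    intro k m hkm
    have : (k : ℝ) + m = e + 3 := by exact_mod_cast hkm
    push_cast
    linarith
  rw [hden 0 (e + 2 + 1) (by ring), hden 1 (e + 2) (by ring), hden 2 (e + 1) (by ring),
    hden 3 e (by ring)]
  have hG : 0 < Real.Gamma (3 * ((e + 2 : ℕ) : ℝ) / 2 + 2) :=
    Real.Gamma_pos_of_pos (by positivity)
  rw [show e + 2 + 2 * 0 + 2 * (e + 2 + 1) = 3 * (e + 2) + 2 by ring,
    show e + 2 + 2 * 1 + 2 * (e + 2) = 3 * (e + 2) + 2 by ring,
    show e + 2 + 2 * 2 + 2 * (e + 1) = 3 * (e + 2) + 2 by ring,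
    show e + 2 + 2 * 3 + 2 * e = 3 * (e + 2) + 2 by ring]
  generalize Real.Gamma (3 * ((e + 2 : ℕ) : ℝ) / 2 + 2) = G at *
  generalize Real.pi ^ ((((e + 2 : ℕ) : ℝ) - 1) / 2) = P
  generalize R ^ (3 * (e + 2) + 2) = Q
  rw [ha, hb]
  simp only [Nat.factorial_succ]
  push_cast
  rw [show (e : ℝ) + 2 - 1 = e + 1 by ring]
  field_simp
  ring

theorem stmt18 (d : ℕ) (hd : 2 ≤ d) (c t : ℝ) (hc : 0 < c) (ht : 0 < t) :
    (∀ x : EuclideanSpace ℝ (Fin d), ‖x‖ < c * t →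
      0 ≤ Real.Gamma (3 * (d : ℝ) + 3) * ((d : ℝ) + 1) /
            (Real.pi ^ (((d : ℝ) - 1) / 2) * (2 * c * t) ^ (3 * d + 2) *
              Real.Gamma ((d : ℝ) - 1) * Real.Gamma (3 * ((d : ℝ) + 3) / 2 - 3) *
              (3 * (d : ℝ) + 7) * (3 * (d : ℝ) + 5)) *
          (4 * ((d : ℝ) + 4) / (((d : ℝ) + 1) * (d : ℝ) * ((d : ℝ) - 1)) *
              (c ^ 2 * t ^ 2 - ‖x‖ ^ 2) ^ (d + 1) +
            2 * (6 * (d : ℝ) ^ 2 + 6 * (d : ℝ) + 8) / (((d : ℝ) + 1) * (d : ℝ) * ((d : ℝ) - 1)) *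
              x ⟨d - 1, by omega⟩ ^ 2 * (c ^ 2 * t ^ 2 - ‖x‖ ^ 2) ^ d -
            8 * x ⟨d - 1, by omega⟩ ^ 4 * (c ^ 2 * t ^ 2 - ‖x‖ ^ 2) ^ (d - 1) +
            8 / 3 * ((d : ℝ) + 1) * x ⟨d - 1, by omega⟩ ^ 6 *
              (c ^ 2 * t ^ 2 - ‖x‖ ^ 2) ^ (d - 2))) ∧
    (∫ x in Metric.ball (0 : EuclideanSpace ℝ (Fin d)) (c * t),
      Real.Gamma (3 * (d : ℝ) + 3) * ((d : ℝ) + 1) /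
          (Real.pi ^ (((d : ℝ) - 1) / 2) * (2 * c * t) ^ (3 * d + 2) *
            Real.Gamma ((d : ℝ) - 1) * Real.Gamma (3 * ((d : ℝ) + 3) / 2 - 3) *
            (3 * (d : ℝ) + 7) * (3 * (d : ℝ) + 5)) *
        (4 * ((d : ℝ) + 4) / (((d : ℝ) + 1) * (d : ℝ) * ((d : ℝ) - 1)) *
            (c ^ 2 * t ^ 2 - ‖x‖ ^ 2) ^ (d + 1) +
          2 * (6 * (d : ℝ) ^ 2 + 6 * (d : ℝ) + 8) / (((d : ℝ) + 1) * (d : ℝ) * ((d : ℝ) - 1)) *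
            x ⟨d - 1, by omega⟩ ^ 2 * (c ^ 2 * t ^ 2 - ‖x‖ ^ 2) ^ d -
          8 * x ⟨d - 1, by omega⟩ ^ 4 * (c ^ 2 * t ^ 2 - ‖x‖ ^ 2) ^ (d - 1) +
          8 / 3 * ((d : ℝ) + 1) * x ⟨d - 1, by omega⟩ ^ 6 *
            (c ^ 2 * t ^ 2 - ‖x‖ ^ 2) ^ (d - 2))) = 1 := by
  have hR : 0 < c * t := mul_pos hc ht
  have hd1 : (0 : ℝ) < (d : ℝ) - 1 := by
    have : (2 : ℝ) ≤ d := by exact_mod_cast hd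
    linarith
  have hΓ1 : 0 < Real.Gamma ((d : ℝ) - 1) := Real.Gamma_pos_of_pos hd1
  have hΓ2 : 0 < Real.Gamma (3 * ((d : ℝ) + 3) / 2 - 3) :=
    Real.Gamma_pos_of_pos (by linarith)
  have hΓ3 : 0 < Real.Gamma (3 * (d : ℝ) + 3) := Real.Gamma_pos_of_pos (by positivity)
  have hπ : 0 < Real.pi ^ (((d : ℝ) - 1) / 2) := Real.rpow_pos_of_pos Real.pi_pos _
  constructor
  · intro x hx
    refine mul_nonneg (by positivity) (density_bracket_nonneg d hd _ _ ?_)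
    rw [← mul_pow, sub_pos]
    exact pow_lt_pow_left₀ hx (norm_nonneg x) (by norm_num)
  · rw [integral_const_mul]
    simp only [← mul_pow c t 2]
    rw [integral_density_bracket d hd _ _ hR]
    have hΓ4 : 0 < Real.Gamma (3 * (d : ℝ) / 2 + 2) := Real.Gamma_pos_of_pos (by positivity)
    have hdup := Real.Gamma_mul_Gamma_add_half (3 * ((d : ℝ) + 3) / 2 - 3)
    rw [show 3 * ((d : ℝ) + 3) / 2 - 3 + 1 / 2 = 3 * (d : ℝ) / 2 + 2 by ring,
      show 2 * (3 * ((d : ℝ) + 3) / 2 - 3) = 3 * (d : ℝ) + 3 by ring,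
      show 1 - (3 * (d : ℝ) + 3) = -((3 * d + 2 : ℕ) : ℝ) by push_cast; ring,
      Real.rpow_neg (by norm_num), Real.rpow_natCast] at hdup
    rw [mul_assoc 2 c t, mul_pow 2 (c * t)]
    have h2 : (0 : ℝ) < 2 ^ (3 * d + 2) := by positivity
    have hRp : 0 < (c * t) ^ (3 * d + 2) := by positivity
    generalize Real.Gamma (3 * ((d : ℝ) + 3) / 2 - 3) = G2 at *
    generalize Real.Gamma (3 * (d : ℝ) / 2 + 2) = G4 at *
    generalize Real.Gamma (3 * (d : ℝ) + 3) = G3 at *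
    generalize Real.Gamma ((d : ℝ) - 1) = G1 at *
    generalize Real.pi ^ (((d : ℝ) - 1) / 2) = P at *
    generalize (c * t) ^ (3 * d + 2) = Q at *
    generalize (2 : ℝ) ^ (3 * d + 2) = T at *
    have hG : G3 * Real.sqrt Real.pi = T * (G2 * G4) := by
      rw [hdup]
      field_simp
    calc _ = G3 * Real.sqrt Real.pi / (T * (G2 * G4)) := by
          field_simp
      _ = 1 := by
          rw [hG]
          exact div_self (by positivity)
end
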